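/- arXiv:0801.0233 — 2 statements merged into one kernel-verified Lean document; each statement's English description precedes it below -/
import Mathlib

section
/- Let r ≥ 1, let λ̄ = (λ^{(1)},…,λ^{(r)}) be a sequence of partitions in P_n, and let μ ∈ P_n. Then the coefficient c_λ̄^μ(y) in the Schur expansion s_λ̄(x|y) = Σ_{μ∈P_n} c_λ̄^μ(y) s_μ(x) equals Σ_{T ∈ LR_λ̄^μ} c_T(y), i.e. the sum over all barred skew tableaux T of shape λ̄ with Yamanouchi unbarred column word and unbarred content μ of the monomials Π_{a∈T barred} y^{(i(a))}_{a+c(a)−r(a)}. -/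
open Finset MvPolynomial

attribute [local instance] Classical.propDecidable

/-- A partition in `P_n`: a weakly decreasing sequence of naturals. -/
def IsPartition {n : ℕ} (lam : Fin n → ℕ) : Prop := Antitone lam

/-- The cells of the Young diagram of `lam`, as pairs (row, column), 0-based. -/
noncomputable def cells {n : ℕ} (lam : Fin n → ℕ) : Finset (Fin n × ℕ) :=
  (Finset.univ ×ˢ Finset.range (Finset.univ.sup lam)).filter fun c => c.2 < lam c.1

/-- Semistandardness for a filling with values in `Fin n` (0-based values):
rows weakly increase, columns strictly increase. -/
def IsSSYT {n : ℕ} (lam : Fin n → ℕ) (T : cells lam → Fin n) : Prop :=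
  (∀ c d : cells lam, (c : Fin n × ℕ).1 = (d : Fin n × ℕ).1 →
      (c : Fin n × ℕ).2 ≤ (d : Fin n × ℕ).2 → T c ≤ T d) ∧
  (∀ c d : cells lam, (c : Fin n × ℕ).2 = (d : Fin n × ℕ).2 →
      (c : Fin n × ℕ).1 < (d : Fin n × ℕ).1 → T c < T d)

/-- The y-subscript `a + c(a) - r(a)` of a cell (1-based value and coordinates). -/
def ysub {n : ℕ} (a : Fin n) (c : Fin n × ℕ) : ℤ := (a : ℤ) + 1 + (c.2 : ℤ) - ((c.1 : ℕ) : ℤ)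

/-- The Schur polynomial `s_lam(x)`, in the ring with `x`-variables `Sum.inl i`
and `y`-variables `Sum.inr (i, k)` (family `i`, subscript `k`). -/
noncomputable def schur (n r : ℕ) (lam : Fin n → ℕ) :
    MvPolynomial (Fin n ⊕ Fin r × ℤ) ℤ :=
  ∑ T ∈ Finset.univ.filter (IsSSYT lam), ∏ c : cells lam, X (Sum.inl (T c))

/-- The factorial Schur polynomial `s_lam(x | y^{(i)})`. -/
noncomputable def factSchur (n r : ℕ) (i : Fin r) (lam : Fin n → ℕ) :
    MvPolynomial (Fin n ⊕ Fin r × ℤ) ℤ :=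
  ∑ T ∈ Finset.univ.filter (IsSSYT lam),
    ∏ c : cells lam,
      (X (Sum.inl (T c)) + X (Sum.inr (i, ysub (T c) (c : Fin n × ℕ))))

/-- A barred filling of a single Young diagram: an entry is a value in `Fin n`
(0-based) together with a `Bool` recording whether it is barred.  Rows weakly
increase and columns strictly increase in value, disregarding bars. -/
def IsBarred {n : ℕ} (lam : Fin n → ℕ) (T : cells lam → Fin n × Bool) : Prop :=
  (∀ c d : cells lam, (c : Fin n × ℕ).1 = (d : Fin n × ℕ).1 →
      (c : Fin n × ℕ).2 ≤ (d : Fin n × ℕ).2 → (T c).1 ≤ (T d).1) ∧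
  (∀ c d : cells lam, (c : Fin n × ℕ).2 = (d : Fin n × ℕ).2 →
      (c : Fin n × ℕ).1 < (d : Fin n × ℕ).1 → (T c).1 < (T d).1)

/-- A barred skew tableau of shape `λ̄ = (lam 0, …, lam (r-1))`: since consecutive
diagrams are placed strictly below and to the left of the preceding one, no two
diagrams share a row or a column, so such a tableau is exactly a tuple of barred
fillings of the individual diagrams. -/
def IsBarredSkew {n r : ℕ} (lam : Fin r → Fin n → ℕ)
    (T : (i : Fin r) → cells (lam i) → Fin n × Bool) : Prop :=
  ∀ i, IsBarred (lam i) (T i)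

/-- Unbarred content of a barred filling of one diagram. -/
noncomputable def content1 {n : ℕ} (lam : Fin n → ℕ) (T : cells lam → Fin n × Bool)
    (k : Fin n) : ℕ :=
  (Finset.univ.filter fun c : cells lam => T c = (k, false)).card

/-- Unbarred content `ω(T)` of a barred skew tableau. -/
noncomputable def contentT {n r : ℕ} (lam : Fin r → Fin n → ℕ)
    (T : (i : Fin r) → cells (lam i) → Fin n × Bool) (k : Fin n) : ℕ :=
  ∑ i, content1 (lam i) (T i) k

/-- The monomial `c_T(y)` contributed by the barred entries of one diagram
(living in the ring of `y`-variables only). -/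
noncomputable def cT1 {n : ℕ} (r : ℕ) (i : Fin r) (lam : Fin n → ℕ)
    (T : cells lam → Fin n × Bool) : MvPolynomial (Fin r × ℤ) ℤ :=
  ∏ c ∈ Finset.univ.filter (fun c : cells lam => (T c).2 = true),
    X (i, ysub (T c).1 (c : Fin n × ℕ))

/-- The monomial `c_T(y)` of a barred skew tableau. -/
noncomputable def cT {n r : ℕ} (lam : Fin r → Fin n → ℕ)
    (T : (i : Fin r) → cells (lam i) → Fin n × Bool) : MvPolynomial (Fin r × ℤ) ℤ :=
  ∏ i, cT1 r i (lam i) (T i)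

/-- The unbarred column word of a barred filling of one diagram: unbarred values
(0-based) read down each column, from the rightmost column to the leftmost. -/
noncomputable def colWord1 {n : ℕ} (lam : Fin n → ℕ)
    (T : cells lam → Fin n × Bool) : List ℕ :=
  ((List.range (Finset.univ.sup lam)).reverse).flatMap fun j =>
    (List.finRange n).filterMap fun i =>
      if h : (i, j) ∈ cells lam then
        (if (T ⟨(i, j), h⟩).2 = false then some ((T ⟨(i, j), h⟩).1 : ℕ) else none)
      else none

/-- The unbarred column word of a barred skew tableau: diagram `lam 0` is the
rightmost, so its word comes first. -/
noncomputable def colWord {n r : ℕ} (lam : Fin r → Fin n → ℕ)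
    (T : (i : Fin r) → cells (lam i) → Fin n × Bool) : List ℕ :=
  (List.finRange r).flatMap fun i => colWord1 (lam i) (T i)

/-- A word (with 0-based values) is Yamanouchi if every initial segment contains
at least as many `k`'s as `(k+1)`'s, for every `k`. -/
def IsYam (w : List ℕ) : Prop :=
  ∀ t k, ((w.take t).count (k + 1)) ≤ (w.take t).count k

/-- The alternant `a_ξ(x) = det[(x_i)^{ξ_j}]`. -/
noncomputable def avand (n r : ℕ) (xi : Fin n → ℕ) :
    MvPolynomial (Fin n ⊕ Fin r × ℤ) ℤ :=
  Matrix.det (Matrix.of fun i j : Fin n =>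
    (X (Sum.inl i) : MvPolynomial (Fin n ⊕ Fin r × ℤ) ℤ) ^ xi j)

/-- `ρ = (n-1, n-2, …, 0)`. -/
def rhoPart (n : ℕ) : Fin n → ℕ := fun i => n - 1 - (i : ℕ)

/-!
The Schur expansion is read off after multiplying by the alternant `a_ρ`, since
`a_ρ s_μ = a_{μ+ρ}` and the alternants of the `μ + ρ` are linearly independent.

Let `ν` be a partition. As `s_λ(x|y)` is symmetric, `a_{ν+ρ} s_λ(x|y)` is the antisymmetrisation of
`x^{ν+ρ} s_λ(x|y)`, hence a sum over the barred tableaux `T` of `c_T(y) a_{ν+ω(T)+ρ}`. In the manner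
of Stembridge, the `T` whose column word leaves the dominant chamber when started at `ν` cancel. Let
column `j`, counted from the right, be the first after which the word has left it, and `k` the least
value such that the exponent of `k + 1` then exceeds that of `k`. Column `j` has added a single
unbarred `k + 1` and no unbarred `k`, so that `x_k` and `x_{k+1}` have the same exponent in
`x^{ν+ρ}` times the monomial of the columns `≥ j`. With these columns fixed, the sum over the
fillings of the columns `< j` that only differ in their bars and in their entries `k`, `k + 1` is
symmetric in `x_k` and `x_{k+1}`, a factorial version of the Bender–Knuth symmetry. The
antisymmetrisation of the product is therefore `0`. It is essential here that column `j` contains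
an entry `k + 1`: a `k` in it then stands above a `k + 1`, and this makes the refilled tableaux
semistandard across columns `j - 1` and `j`.

Starting from `ν = 0` and multiplying by one factor of `s_λ̄(x|y)` after the other gives the rule.
The instance `y = 0` of a single factor is `a_ρ s_μ = a_{μ+ρ}`, because the only Yamanouchi tableau
without bars is the superstandard one.
-/

section TwoVariables

variable {R : Type*} [CommRing R]

/-- The one-row factorial Schur polynomial in two variables `a`, `b`, on the columns `L, …, U - 1`:
the columns below `m` carry `a`, the others `b`, and `m` runs over all possibilities. -/
def rowSum (a b : R) (y : ℕ → R) (L U : ℕ) : R :=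
  ∑ m ∈ Icc L U, (∏ j ∈ Ico L m, (a + y j)) * ∏ j ∈ Ico m U, (b + y (j + 1))

lemma rowSum_succ (a b : R) (y : ℕ → R) {L U : ℕ} (h : L ≤ U) :
    rowSum a b y L (U + 1) =
      rowSum a b y L U * (b + y (U + 1)) + ∏ j ∈ Ico L (U + 1), (a + y j) := by
  rw [rowSum, sum_Icc_succ_top (by omega), Ico_self, prod_empty, mul_one, rowSum, sum_mul]
  congr 1
  refine sum_congr rfl fun m hm => ?_
  rw [prod_Ico_succ_top (mem_Icc.1 hm).2, mul_assoc]

lemma sub_mul_rowSum (a b : R) (y : ℕ → R) {L U : ℕ} (h : L ≤ U) :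
    (a - b) * rowSum a b y L U =
      ∏ j ∈ Ico L (U + 1), (a + y j) - ∏ j ∈ Ico L (U + 1), (b + y j) := by
  induction U, h using Nat.le_induction with
  | base => simp [rowSum]
  | succ U hU ih =>
    rw [rowSum_succ a b y hU, prod_Ico_succ_top (b := U + 1) (by omega),
      prod_Ico_succ_top (b := U + 1) (by omega)]
    linear_combination (b + y (U + 1)) * ih

lemma rowSum_comm (a b : R) (y : ℕ → R) {L U : ℕ} (h : L ≤ U) :
    rowSum a b y L U = rowSum b a y L U := by
  induction U, h using Nat.le_induction with
  | base => simp [rowSum]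
  | succ U hU ih =>
    rw [rowSum_succ a b y hU, rowSum_succ b a y hU, ← ih]
    linear_combination -sub_mul_rowSum a b y hU

/-- The least number of cells that can be filled with `k` or less in row `i`, when the entries
smaller than `k` (resp. than `k + 2`) occupy the first `A i` (resp. `B i`) cells: every entry
`k + 1` or less of row `i + 1` lies below an entry `k` or less. -/
def minSplit (A B : ℕ → ℕ) (i : ℕ) : ℕ := max (A i) (B (i + 1))

/-- The greatest number of cells that can be filled with `k` or less in row `i`, in the situation of
`minSplit`. -/
def maxSplit (A B : ℕ → ℕ) (i : ℕ) : ℕ := if i = 0 then B 0 else min (B i) (A (i - 1))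

lemma maxSplit_le (A B : ℕ → ℕ) (i : ℕ) : maxSplit A B i ≤ B i := by
  unfold maxSplit; split_ifs with h <;> simp [h]

/-- The weight of the cells `A, …, B - 1` of row `i`, when those before `m` carry the variable `a`
and the others the variable `b`. -/
def splitWeight (a b : R) (y : ℤ → R) (A B i m : ℕ) : R :=
  (∏ j ∈ Ico A m, (a + y (j - i))) * ∏ j ∈ Ico m B, (b + y (j - i + 1))

lemma splitWeight_eq_prod_ite (a b : R) (y : ℤ → R) (i : ℕ) {A B m : ℕ} (hA : A ≤ m) (hB : m ≤ B) :
    splitWeight a b y A B i m =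
      ∏ j ∈ Ico A B, if j < m then a + y (j - i) else b + y (j - i + 1) := by
  rw [splitWeight, ← prod_Ico_consecutive _ hA hB]
  congr 1
  · exact prod_congr rfl fun j hj => (if_pos (mem_Ico.1 hj).2).symm
  · exact prod_congr rfl fun j hj => (if_neg (mem_Ico.1 hj).1.not_gt).symm

lemma sum_splitWeight (a b : R) (y : ℤ → R) (i : ℕ) {A B L U : ℕ} (hA : A ≤ L) (hB : U ≤ B) :
    ∑ m ∈ Icc L U, splitWeight a b y A B i m =
      rowSum a b (fun j => y (j - i)) L U *
        ((∏ j ∈ Ico A L, (a + y (j - i))) * ∏ j ∈ Ico U B, (b + y (j - i + 1))) := by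
  rw [rowSum, sum_mul]
  refine sum_congr rfl fun m hm => ?_
  obtain ⟨hLm, hmU⟩ := mem_Icc.1 hm
  rw [splitWeight, ← prod_Ico_consecutive _ hA hLm, ← prod_Ico_consecutive _ hmU hB]
  have shift (j : ℕ) : ((j + 1 : ℕ) : ℤ) - i = j - i + 1 := by push_cast; ring
  simp only [shift]
  ring

/-- The cells forced to carry `a` are paired with the cells below them, forced to carry `b`. -/
lemma prod_forced_eq_prod_pairs (a b : R) (y : ℤ → R) {n : ℕ} {A B : ℕ → ℕ} (hB : B n = 0) :
    (∏ i ∈ range n, ∏ j ∈ Ico (A i) (minSplit A B i), (a + y (j - i))) *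
        ∏ i ∈ range n, ∏ j ∈ Ico (maxSplit A B i) (B i), (b + y (j - i + 1)) =
      ∏ i ∈ range (n - 1), ∏ j ∈ Ico (A i) (B (i + 1)), (a + y (j - i)) * (b + y (j - i)) := by
  obtain _ | n := n
  · simp
  have hlast : minSplit A B n = A n := by simp [minSplit, hB]
  have hfirst : maxSplit A B 0 = B 0 := by simp [maxSplit]
  rw [prod_range_succ, prod_range_succ' (fun i => ∏ j ∈ Ico (maxSplit A B i) _, _), hlast, hfirst,
    Ico_self, Ico_self, prod_empty, prod_empty, mul_one, mul_one, ← prod_mul_distrib]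
  refine prod_congr rfl fun i _ => ?_
  have hupper : Ico (A i) (minSplit A B i) = Ico (A i) (B (i + 1)) := by
    ext; simp [minSplit]; omega
  have hlower : Ico (maxSplit A B (i + 1)) (B (i + 1)) = Ico (A i) (B (i + 1)) := by
    ext; simp [maxSplit]; omega
  have shift (j : ℕ) : (j : ℤ) - (i + 1 : ℕ) + 1 = j - i := by push_cast; ring
  simp only [hupper, hlower, shift, prod_mul_distrib]

theorem prod_sum_splitWeight_comm (a b : R) (y : ℤ → R) {n : ℕ} {A B : ℕ → ℕ}
    (hAB : ∀ i < n, minSplit A B i ≤ maxSplit A B i) (hB : B n = 0) :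
    ∏ i ∈ range n, ∑ m ∈ Icc (minSplit A B i) (maxSplit A B i), splitWeight a b y (A i) (B i) i m =
      ∏ i ∈ range n,
        ∑ m ∈ Icc (minSplit A B i) (maxSplit A B i), splitWeight b a y (A i) (B i) i m := by
  have expand (a b : R) (i : ℕ) :=
    sum_splitWeight a b y i (A := A i) (L := minSplit A B i) (le_max_left _ _) (maxSplit_le A B i)
  rw [prod_congr rfl fun i _ => expand a b i, prod_congr rfl fun i _ => expand b a i,
    prod_mul_distrib, prod_mul_distrib, prod_mul_distrib, prod_mul_distrib,
    prod_forced_eq_prod_pairs a b y hB, prod_forced_eq_prod_pairs b a y hB]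
  congr 1
  · exact prod_congr rfl fun i hi => rowSum_comm _ _ _ (hAB i (mem_range.1 hi))
  · simp only [mul_comm]

end TwoVariables

section Tableaux

variable {n : ℕ} {lam : Fin n → ℕ}

lemma mem_cells {c : Fin n × ℕ} : c ∈ cells lam ↔ c.2 < lam c.1 := by
  simp only [cells, mem_filter, mem_product, mem_univ, mem_range, true_and, and_iff_right_iff_imp]
  exact fun h => h.trans_le (le_sup (f := lam) (mem_univ _))

lemma col_lt_sup (c : cells lam) : c.1.2 < univ.sup lam :=
  (mem_cells.1 c.2).trans_le (le_sup (f := lam) (mem_univ _))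

lemma prod_cells_strip {M : Type*} [CommMonoid M] {a b : Fin n → ℕ} (hb : ∀ i, b i ≤ lam i)
    (f : Fin n × ℕ → M) :
    ∏ c : cells lam with a c.1.1 ≤ c.1.2 ∧ c.1.2 < b c.1.1, f c =
      ∏ i, ∏ m ∈ Ico (a i) (b i), f (i, m) := by
  rw [prod_filter, prod_coe_sort (cells lam) fun c => if a c.1 ≤ c.2 ∧ c.2 < b c.1 then f c else 1,
    ← prod_filter]
  refine prod_finset_product _ _ _ fun c => ?_
  simp only [mem_filter, mem_cells, mem_univ, true_and, mem_Ico, and_iff_right_iff_imp]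
  exact fun h => h.2.trans_le (hb _)

/-- The number of entries smaller than `m` in row `i` of the semistandard tableau `T`; the row is an
arbitrary natural number, rows outside the diagram being empty. -/
noncomputable def rowLen (T : cells lam → Fin n) (m i : ℕ) : ℕ :=
  univ.sup fun c : cells lam => if (c.1.1 : ℕ) = i ∧ (T c : ℕ) < m then c.1.2 + 1 else 0

lemma lt_rowLen {T : cells lam → Fin n} (hT : IsSSYT lam T) (m : ℕ) (c : cells lam) :
    c.1.2 < rowLen T m c.1.1 ↔ (T c : ℕ) < m := by
  rw [rowLen, Finset.lt_sup_iff]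
  constructor
  · rintro ⟨d, -, hd⟩
    split_ifs at hd with h
    · have hle : (T c : ℕ) ≤ T d := hT.1 c d (Fin.ext h.1.symm) (by omega)
      omega
    · omega
  · exact fun h => ⟨c, mem_univ _, by simp [h]⟩

lemma rowLen_le (T : cells lam → Fin n) (m : ℕ) (i : Fin n) : rowLen T m i ≤ lam i := by
  refine Finset.sup_le fun c _ => ?_
  split_ifs with h
  · obtain rfl : c.1.1 = i := Fin.ext h.1
    exact mem_cells.1 c.2
  · exact Nat.zero_le _

lemma rowLen_eq_zero (T : cells lam → Fin n) (m : ℕ) {i : ℕ} (h : n ≤ i) : rowLen T m i = 0 := by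
  refine Nat.le_zero.1 (Finset.sup_le fun c _ => ?_)
  rw [if_neg]
  have := c.1.1.2
  omega

lemma rowLen_mono (T : cells lam → Fin n) {m m' : ℕ} (h : m ≤ m') (i : ℕ) :
    rowLen T m i ≤ rowLen T m' i := by
  refine Finset.sup_mono_fun fun c _ => ?_
  split_ifs <;> omega

lemma rowLen_succ_le (hlam : IsPartition lam) {T : cells lam → Fin n} (hT : IsSSYT lam T) (m : ℕ)
    {i i' : ℕ} (hi : i < i') : rowLen T (m + 1) i' ≤ rowLen T m i := by
  obtain hn | hn := le_or_gt n i'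
  · simp [rowLen_eq_zero T (m + 1) hn]
  by_contra! hlt
  have hlower : rowLen T m i < lam ⟨i', hn⟩ := hlt.trans_le (rowLen_le T (m + 1) ⟨i', hn⟩)
  have hupper : rowLen T m i < lam ⟨i, hi.trans hn⟩ := hlower.trans_le (hlam hi.le)
  let c : cells lam := ⟨(⟨i, hi.trans hn⟩, rowLen T m i), mem_cells.2 hupper⟩
  let d : cells lam := ⟨(⟨i', hn⟩, rowLen T m i), mem_cells.2 hlower⟩
  have hd : (T d : ℕ) < m + 1 := (lt_rowLen hT (m + 1) d).1 hlt
  have hcd : (T c : ℕ) < T d := hT.2 c d rfl hi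
  exact lt_irrefl _ ((lt_rowLen hT m c).2 (by omega))

lemma rowLen_antitone (hlam : IsPartition lam) {T : cells lam → Fin n} (hT : IsSSYT lam T) (m : ℕ) :
    Antitone (rowLen T m) := by
  intro i i' h
  obtain rfl | hlt := h.eq_or_lt
  · rfl
  · exact (rowLen_mono T m.le_succ i').trans (rowLen_succ_le hlam hT m hlt)

lemma isSSYT_of_lt_iff {T : cells lam → Fin n} (N : ℕ → Fin n → ℕ)
    (hN : ∀ m (c : cells lam), c.1.2 < N m c.1.1 ↔ (T c : ℕ) < m)
    (hcol : ∀ m i i', i < i' → N (m + 1) i' ≤ N m i) : IsSSYT lam T := by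
  constructor
  · intro c d hrow hle
    have hd := (hN (T d + 1) d).2 (Nat.lt_succ_self _)
    exact Fin.le_def.2 (Nat.lt_succ_iff.1 ((hN (T d + 1) c).1 (hrow ▸ hle.trans_lt hd)))
  · intro c d hcd hlt
    have hd := (hN (T d + 1) d).2 (Nat.lt_succ_self _)
    exact Fin.lt_def.2 ((hN (T d) c).1 (hcd ▸ hd.trans_le (hcol _ _ _ hlt)))

/-- The filling obtained from `T` by forgetting the difference between `k` and `k'` in the first `j`
columns. Its fibres are the classes on which the Bender–Knuth symmetry takes place. -/
def blur (k k' : Fin n) (j : ℕ) (T : cells lam → Fin n) (c : cells lam) : Fin n :=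
  if c.1.2 < j ∧ T c = k' then k else T c

lemma blur_eq_iff {k k' : Fin n} {j : ℕ} {T T₀ : cells lam → Fin n} :
    blur k k' j T = blur k k' j T₀ ↔
      ∀ c, T c = T₀ c ∨ c.1.2 < j ∧ (T c = k ∨ T c = k') ∧ (T₀ c = k ∨ T₀ c = k') := by
  rw [funext_iff]
  refine forall_congr' fun c => ?_
  unfold blur
  grind

/-- The number of entries smaller than `m` in the first `j` cells of row `i` of `T`. -/
noncomputable def truncLen (T : cells lam → Fin n) (j m i : ℕ) : ℕ := min j (rowLen T m i)

lemma lt_truncLen {T : cells lam → Fin n} (hT : IsSSYT lam T) (j m : ℕ) (c : cells lam) :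
    c.1.2 < truncLen T j m c.1.1 ↔ c.1.2 < j ∧ (T c : ℕ) < m := by
  rw [truncLen, lt_min_iff, lt_rowLen hT]

lemma rowLen_congr_of_blur_eq {k k' : Fin n} (hk : (k' : ℕ) = k + 1) {j : ℕ}
    {T T₀ : cells lam → Fin n} (h : blur k k' j T = blur k k' j T₀) {m : ℕ} (hm : m ≠ k + 1)
    (i : ℕ) : rowLen T m i = rowLen T₀ m i := by
  have hlt (c : cells lam) : (T c : ℕ) < m ↔ (T₀ c : ℕ) < m := by
    obtain h | ⟨-, h, h₀⟩ := blur_eq_iff.1 h c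
    · rw [h]
    · rcases h with h | h <;> rcases h₀ with h₀ | h₀ <;> rw [h, h₀] <;> omega
  simp only [rowLen, hlt]

/-- The possible numbers of entries at most `k` in the rows of the first `j` columns, for the
tableaux with the same blur as `T₀`. -/
noncomputable def splits (k : Fin n) (j : ℕ) (T₀ : cells lam → Fin n) : Finset (Fin n → ℕ) :=
  Fintype.piFinset fun i =>
    Icc (minSplit (truncLen T₀ j k) (truncLen T₀ j (k + 2)) i)
      (maxSplit (truncLen T₀ j k) (truncLen T₀ j (k + 2)) i)

/-- The tableau with the same blur as `T₀` having `μ i` entries at most `k` among the first `j`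
cells of row `i`. -/
noncomputable def refill (k k' : Fin n) (j : ℕ) (T₀ : cells lam → Fin n) (μ : Fin n → ℕ)
    (c : cells lam) : Fin n :=
  if c.1.2 < j ∧ (T₀ c = k ∨ T₀ c = k') then (if c.1.2 < μ c.1.1 then k else k') else T₀ c

lemma mem_splits {k : Fin n} {j : ℕ} {T₀ : cells lam → Fin n} {μ : Fin n → ℕ} :
    μ ∈ splits k j T₀ ↔ ∀ i : Fin n,
      (truncLen T₀ j k i ≤ μ i ∧ truncLen T₀ j (k + 2) (i + 1) ≤ μ i) ∧
        μ i ≤ truncLen T₀ j (k + 2) i ∧ ((i : ℕ) ≠ 0 → μ i ≤ truncLen T₀ j k (i - 1)) := by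
  simp only [splits, Fintype.mem_piFinset, mem_Icc, minSplit, max_le_iff, maxSplit]
  refine forall_congr' fun i => and_congr_right fun _ => ?_
  split_ifs with hi <;> simp [hi]

lemma truncLen_mem_splits (hlam : IsPartition lam) {k k' : Fin n} (hk : (k' : ℕ) = k + 1) {j : ℕ}
    {T T₀ : cells lam → Fin n} (hT : IsSSYT lam T) (h : blur k k' j T = blur k k' j T₀) :
    (fun i : Fin n => truncLen T j (k + 1) i) ∈ splits k j T₀ := by
  refine mem_splits.2 fun i => ?_
  simp only [truncLen, ← rowLen_congr_of_blur_eq hk h (Nat.ne_of_lt (Nat.lt_succ_self _)),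
    ← rowLen_congr_of_blur_eq hk h (m := k + 2) (by omega)]
  refine ⟨⟨min_le_min_left _ (rowLen_mono T (by omega) i), min_le_min_left _ ?_⟩,
    min_le_min_left _ (rowLen_mono T (by omega) i), fun hi => min_le_min_left _ ?_⟩
  · exact rowLen_succ_le hlam hT (k + 1) (Nat.lt_succ_self _)
  · exact rowLen_succ_le hlam hT k (by omega)

lemma blur_refill (k k' : Fin n) (j : ℕ) (T₀ : cells lam → Fin n) (μ : Fin n → ℕ) :
    blur k k' j (refill k k' j T₀ μ) = blur k k' j T₀ := by
  refine blur_eq_iff.2 fun c => ?_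
  unfold refill
  grind

/-- Every entry `k` of column `j` of `T` comes with an entry `k'` of the same column. -/
def IsPaired (k k' : Fin n) (j : ℕ) (T : cells lam → Fin n) : Prop :=
  ∀ c : cells lam, c.1.2 = j → T c = k → ∃ d : cells lam, d.1.2 = j ∧ T d = k'

lemma le_of_mem_splits (hlam : IsPartition lam) {k k' : Fin n} (hk : (k' : ℕ) = k + 1) {j : ℕ}
    {T₀ : cells lam → Fin n} (hT : IsSSYT lam T₀) (hcol : IsPaired k k' j T₀)
    {μ : Fin n → ℕ} (hμ : μ ∈ splits k j T₀) {c : cells lam} (hc : T₀ c ≤ k) (hj : j ≤ c.1.2) :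
    j ≤ μ c.1.1 := by
  obtain ⟨⟨hA, hB⟩, -⟩ := mem_splits.1 hμ c.1.1
  let e : cells lam := ⟨(c.1.1, j), mem_cells.2 (hj.trans_lt (mem_cells.1 c.2))⟩
  have hek : T₀ e ≤ k := (hT.1 e c rfl hj).trans hc
  obtain hek | hek := hek.lt_or_eq
  · have hlen : j < rowLen T₀ k c.1.1 := (lt_rowLen hT k e).2 hek
    exact (le_min le_rfl hlen.le).trans hA
  · obtain ⟨d, hdj, hd⟩ := hcol e rfl hek
    have hed : c.1.1 < d.1.1 := by
      by_contra! hle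
      obtain heq | hlt := hle.eq_or_lt
      · obtain rfl : d = e := Subtype.ext (Prod.ext heq hdj)
        rw [← hd, hek] at hk
        omega
      · have := hT.2 d e hdj hlt
        rw [hd, hek, Fin.lt_def] at this
        omega
    have hlen : j < rowLen T₀ (k + 2) d.1.1 := hdj ▸ (lt_rowLen hT (k + 2) d).2 (by omega)
    exact (le_min le_rfl (hlen.le.trans (rowLen_antitone hlam hT _ hed))).trans hB

lemma refill_lt_iff {k k' : Fin n} (hk : (k' : ℕ) = k + 1) {j : ℕ} {T₀ : cells lam → Fin n}
    (hT : IsSSYT lam T₀) {μ : Fin n → ℕ} (hμ : μ ∈ splits k j T₀) {c : cells lam} (hj : c.1.2 < j) :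
    (refill k k' j T₀ μ c : ℕ) < k + 1 ↔ c.1.2 < μ c.1.1 := by
  obtain ⟨⟨hA, -⟩, hB, -⟩ := mem_splits.1 hμ c.1.1
  have hlow : (T₀ c : ℕ) < k → c.1.2 < μ c.1.1 := fun h =>
    ((lt_truncLen hT j k c).2 ⟨hj, h⟩).trans_le hA
  have hhigh : c.1.2 < μ c.1.1 → (T₀ c : ℕ) < k + 2 := fun h =>
    ((lt_truncLen hT j (k + 2) c).1 (h.trans_le hB)).2
  unfold refill
  split_ifs <;> grind

/-- The number of entries smaller than `m` in row `i` of `refill k k' j T₀ μ`. -/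
noncomputable def refillLen (k : Fin n) (j : ℕ) (T₀ : cells lam → Fin n) (μ : Fin n → ℕ) (m : ℕ)
    (i : Fin n) : ℕ :=
  if m = k + 1 then (if μ i < j then μ i else max j (rowLen T₀ m i)) else rowLen T₀ m i

lemma lt_refillLen (hlam : IsPartition lam) {k k' : Fin n} (hk : (k' : ℕ) = k + 1) {j : ℕ}
    {T₀ : cells lam → Fin n} (hT : IsSSYT lam T₀) (hcol : IsPaired k k' j T₀)
    {μ : Fin n → ℕ} (hμ : μ ∈ splits k j T₀) (m : ℕ) (c : cells lam) :
    c.1.2 < refillLen k j T₀ μ m c.1.1 ↔ (refill k k' j T₀ μ c : ℕ) < m := by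
  have hrow := lt_rowLen hT m c
  unfold refillLen
  by_cases hm : m = k + 1
  · rw [if_pos hm]
    obtain hj | hj := lt_or_ge c.1.2 j
    · rw [hm, refill_lt_iff hk hT hμ hj]
      split_ifs
      · rfl
      · omega
    · have hle : (T₀ c : ℕ) < m → j ≤ μ c.1.1 := fun h =>
        le_of_mem_splits hlam hk hT hcol hμ (Fin.le_def.2 (by omega)) hj
      unfold refill
      split_ifs <;> grind
  · rw [if_neg hm, hrow]
    obtain h | ⟨-, h, h₀⟩ := blur_eq_iff.1 (blur_refill k k' j T₀ μ) c
    · rw [h]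
    · grind

lemma refillLen_succ_le (hlam : IsPartition lam) {k : Fin n} {j : ℕ} {T₀ : cells lam → Fin n}
    (hT : IsSSYT lam T₀) {μ : Fin n → ℕ} (hμ : μ ∈ splits k j T₀) (m : ℕ) {i i' : Fin n}
    (hi : i < i') : refillLen k j T₀ μ (m + 1) i' ≤ refillLen k j T₀ μ m i := by
  have hrow := rowLen_succ_le hlam hT m hi
  obtain ⟨⟨-, hlow⟩, -⟩ := mem_splits.1 hμ i
  obtain ⟨-, -, hupp⟩ := mem_splits.1 hμ i'
  unfold refillLen
  by_cases hm : m = k + 1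
  · have hanti : rowLen T₀ (k + 1 + 1) i' ≤ rowLen T₀ (k + 2) (i + 1) :=
      rowLen_antitone hlam hT (k + 2) (Nat.succ_le_of_lt hi)
    subst hm
    rw [if_neg (by omega), if_pos rfl]
    simp only [truncLen] at hlow
    split_ifs <;> omega
  · obtain rfl | hmk := eq_or_ne m k
    · have hanti := rowLen_antitone hlam hT k (Nat.le_sub_one_of_lt hi)
      rw [if_pos rfl, if_neg hm]
      simp only [truncLen] at hupp
      split_ifs <;> omega
    · rwa [if_neg (by omega), if_neg hm]

lemma isSSYT_refill (hlam : IsPartition lam) {k k' : Fin n} (hk : (k' : ℕ) = k + 1) {j : ℕ}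
    {T₀ : cells lam → Fin n} (hT : IsSSYT lam T₀) (hcol : IsPaired k k' j T₀)
    {μ : Fin n → ℕ} (hμ : μ ∈ splits k j T₀) : IsSSYT lam (refill k k' j T₀ μ) :=
  isSSYT_of_lt_iff (refillLen k j T₀ μ) (lt_refillLen hlam hk hT hcol hμ)
    fun m _ _ => refillLen_succ_le hlam hT hμ m

lemma refill_truncLen {k k' : Fin n} (hk : (k' : ℕ) = k + 1) {j : ℕ} {T T₀ : cells lam → Fin n}
    (hT : IsSSYT lam T) (h : blur k k' j T = blur k k' j T₀) :
    refill k k' j T₀ (fun i => truncLen T j (k + 1) i) = T := by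
  funext c
  have hc := blur_eq_iff.1 h c
  have hlt := lt_truncLen hT j (k + 1) c
  simp only [refill, hlt]
  grind

lemma truncLen_refill {k k' : Fin n} (hk : (k' : ℕ) = k + 1) {j : ℕ} {T₀ : cells lam → Fin n}
    (hT : IsSSYT lam T₀) {μ : Fin n → ℕ} (hμ : μ ∈ splits k j T₀)
    (hμT : IsSSYT lam (refill k k' j T₀ μ)) :
    (fun i : Fin n => truncLen (refill k k' j T₀ μ) j (k + 1) i) = μ := by
  funext i
  have hμlam : μ i ≤ lam i :=
    (mem_splits.1 hμ i).2.1.trans ((min_le_right _ _).trans (rowLen_le _ _ i))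
  have hμj : μ i ≤ j := (mem_splits.1 hμ i).2.1.trans (min_le_left _ _)
  refine eq_of_forall_lt_iff fun m => ?_
  obtain hm | hm := lt_or_ge m (lam i)
  · let c : cells lam := ⟨(i, m), mem_cells.2 hm⟩
    refine (lt_truncLen hμT j (k + 1) c).trans ⟨fun h => ?_, fun h => ?_⟩
    · exact (refill_lt_iff hk hT hμ h.1).1 h.2
    · exact ⟨h.trans_le hμj, (refill_lt_iff hk hT hμ (c := c) (h.trans_le hμj)).2 h⟩
  · have hlen : truncLen (refill k k' j T₀ μ) j (k + 1) i ≤ lam i :=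
      (min_le_right _ _).trans (rowLen_le _ _ i)
    omega

section Weight

variable {R : Type*} [CommRing R]

/-- The factorial weight of the first `j` columns of `T`. -/
noncomputable def truncWeight (x : Fin n → R) (y : ℤ → R) (j : ℕ) (T : cells lam → Fin n) : R :=
  ∏ c : cells lam with c.1.2 < j, (x (T c) + y (ysub (T c) c))

lemma truncWeight_refill {k k' : Fin n} (hk : (k' : ℕ) = k + 1) {j : ℕ} {T₀ : cells lam → Fin n}
    (hT : IsSSYT lam T₀) {μ : Fin n → ℕ} (hμ : μ ∈ splits k j T₀) (x : Fin n → R) (y : ℤ → R) :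
    truncWeight x y j (refill k k' j T₀ μ) =
      (∏ c : cells lam with c.1.2 < j ∧ ¬(T₀ c = k ∨ T₀ c = k'), (x (T₀ c) + y (ysub (T₀ c) c))) *
        ∏ i : Fin n, splitWeight (x k) (x k') (fun z => y (k + 1 + z)) (truncLen T₀ j k i)
          (truncLen T₀ j (k + 2) i) i (μ i) := by
  rw [truncWeight, ← prod_filter_mul_prod_filter_not _ fun c : cells lam => T₀ c = k ∨ T₀ c = k',
    filter_filter, filter_filter, mul_comm]
  congr 1
  · refine prod_congr rfl fun c hc => ?_
    rw [refill, if_neg fun h => (mem_filter.1 hc).2.2 h.2]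
  · have hstrip : (univ.filter fun c : cells lam => c.1.2 < j ∧ (T₀ c = k ∨ T₀ c = k')) =
        univ.filter fun c : cells lam =>
          truncLen T₀ j k c.1.1 ≤ c.1.2 ∧ c.1.2 < truncLen T₀ j (k + 2) c.1.1 := by
      ext c
      simp only [mem_filter, mem_univ, true_and, ← not_lt, lt_truncLen hT]
      grind
    have hrow (i : Fin n) : truncLen T₀ j (k + 2) i ≤ lam i :=
      (min_le_right _ _).trans (rowLen_le _ _ i)
    have hsplit (i : Fin n) := splitWeight_eq_prod_ite (x k) (x k') (fun z => y (k + 1 + z)) i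
      (mem_splits.1 hμ i).1.1 (mem_splits.1 hμ i).2.1
    simp only [hsplit]
    rw [← prod_cells_strip hrow fun c => if c.2 < μ c.1 then x k + y (k + 1 + (c.2 - (c.1 : ℕ)))
      else x k' + y (k + 1 + (c.2 - (c.1 : ℕ) + 1)), ← hstrip]
    refine prod_congr rfl fun c hc => ?_
    rw [refill, if_pos (mem_filter.1 hc).2]
    split_ifs
    · rw [ysub, add_sub_assoc]
    · rw [ysub, hk]
      congr 2
      push_cast
      ring

lemma sum_truncWeight_eq (hlam : IsPartition lam) {k k' : Fin n} (hk : (k' : ℕ) = k + 1) {j : ℕ}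
    {T₀ : cells lam → Fin n} (hT : IsSSYT lam T₀) (hcol : IsPaired k k' j T₀)
    (x : Fin n → R) (y : ℤ → R) :
    ∑ T with IsSSYT lam T ∧ blur k k' j T = blur k k' j T₀, truncWeight x y j T =
      (∏ c : cells lam with c.1.2 < j ∧ ¬(T₀ c = k ∨ T₀ c = k'), (x (T₀ c) + y (ysub (T₀ c) c))) *
        ∏ i ∈ range n, ∑ m ∈ Icc (minSplit (truncLen T₀ j k) (truncLen T₀ j (k + 2)) i)
          (maxSplit (truncLen T₀ j k) (truncLen T₀ j (k + 2)) i),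
          splitWeight (x k) (x k') (fun z => y (k + 1 + z)) (truncLen T₀ j k i)
            (truncLen T₀ j (k + 2) i) i m := by
  rw [prod_range, prod_univ_sum, mul_sum]
  refine sum_bij' (fun T _ i => truncLen T j (k + 1) i) (fun μ _ => refill k k' j T₀ μ)
    ?_ ?_ ?_ ?_ ?_
  · exact fun T h => truncLen_mem_splits hlam hk (mem_filter.1 h).2.1 (mem_filter.1 h).2.2
  · exact fun μ hμ => mem_filter.2
      ⟨mem_univ _, isSSYT_refill hlam hk hT hcol hμ, blur_refill k k' j T₀ μ⟩
  · exact fun T h => refill_truncLen hk (mem_filter.1 h).2.1 (mem_filter.1 h).2.2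
  · exact fun μ hμ => truncLen_refill hk hT hμ (isSSYT_refill hlam hk hT hcol hμ)
  · intro T h
    obtain ⟨-, hSSYT, hblur⟩ := mem_filter.1 h
    rw [← truncWeight_refill hk hT (truncLen_mem_splits hlam hk hSSYT hblur),
      refill_truncLen hk hSSYT hblur]

theorem sum_truncWeight_swap (hlam : IsPartition lam) {k k' : Fin n} (hk : (k' : ℕ) = k + 1) {j : ℕ}
    {T₀ : cells lam → Fin n} (hT : IsSSYT lam T₀) (hcol : IsPaired k k' j T₀)
    (x : Fin n → R) (y : ℤ → R) :
    ∑ T with IsSSYT lam T ∧ blur k k' j T = blur k k' j T₀,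
        truncWeight (x ∘ Equiv.swap k k') y j T =
      ∑ T with IsSSYT lam T ∧ blur k k' j T = blur k k' j T₀, truncWeight x y j T := by
  rw [sum_truncWeight_eq hlam hk hT hcol, sum_truncWeight_eq hlam hk hT hcol]
  congr 1
  · refine prod_congr rfl fun c hc => ?_
    obtain ⟨-, hne⟩ := (mem_filter.1 hc).2
    rw [Function.comp_apply, Equiv.swap_apply_of_ne_of_ne (by tauto) (by tauto)]
  · have hsplits : ∀ i < n, minSplit (truncLen T₀ j k) (truncLen T₀ j (k + 2)) i ≤
        maxSplit (truncLen T₀ j k) (truncLen T₀ j (k + 2)) i := by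
      intro i hi
      have hmem := truncLen_mem_splits hlam hk hT (rfl : blur k k' j T₀ = _)
      have hbounds := mem_Icc.1 (Fintype.mem_piFinset.1 hmem ⟨i, hi⟩)
      exact hbounds.1.trans hbounds.2
    have hlast : truncLen T₀ j (k + 2) n = 0 := by
      rw [truncLen, rowLen_eq_zero _ _ le_rfl, Nat.min_zero]
    simp only [Function.comp_apply, Equiv.swap_apply_left, Equiv.swap_apply_right]
    exact prod_sum_splitWeight_comm (x k') (x k) (fun z => y (k + 1 + z)) hsplits hlast

end Weight

end Tableaux

section Alternation

variable {σ K : Type*} [Fintype σ] [DecidableEq σ] [CommRing K]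

/-- The antisymmetrisation `p ↦ ∑ sign(τ) τ(p)` of a polynomial. -/
noncomputable def alternation : MvPolynomial σ K →ₗ[K] MvPolynomial σ K :=
  ∑ τ : Equiv.Perm σ, ((Equiv.Perm.sign τ : ℤˣ) : ℤ) • (rename τ).toLinearMap

lemma alternation_apply (p : MvPolynomial σ K) :
    alternation p = ∑ τ : Equiv.Perm σ, ((Equiv.Perm.sign τ : ℤˣ) : ℤ) • rename τ p := by
  simp [alternation]

lemma alternation_C_mul (a : K) (p : MvPolynomial σ K) :
    alternation (C a * p) = C a * alternation p := by
  rw [C_mul', map_smul, C_mul']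

lemma alternation_mul_of_isSymmetric (p : MvPolynomial σ K) {f : MvPolynomial σ K}
    (hf : f.IsSymmetric) : alternation p * f = alternation (p * f) := by
  rw [alternation_apply, alternation_apply, sum_mul]
  refine sum_congr rfl fun τ _ => ?_
  rw [map_mul, hf τ, smul_mul_assoc]

lemma alternation_eq_zero_of_rename_swap {k k' : σ} (hk : k ≠ k') {p : MvPolynomial σ K}
    (hp : rename (Equiv.swap k k') p = p) : alternation p = 0 := by
  rw [alternation_apply]
  refine sum_involution (fun τ _ => τ * Equiv.swap k k') ?_ ?_ (fun _ _ => mem_univ _) ?_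
  · intro τ _
    have hτ : rename (τ * Equiv.swap k k' : Equiv.Perm σ) p = rename τ p := by
      conv_rhs => rw [← hp, rename_rename]
      rfl
    rw [hτ, Equiv.Perm.sign_mul, Equiv.Perm.sign_swap hk]
    simp
  · exact fun τ _ _ hfix => hk (Equiv.swap_eq_one_iff.1 (mul_eq_left.1 hfix))
  · exact fun τ _ => Equiv.mul_swap_mul_self k k' τ

end Alternation

section FactorialSchur

variable {n : ℕ} {K : Type*} [CommRing K] {lam : Fin n → ℕ}

/-- The factorial Schur polynomial `s_lam(x | y)` for parameters `y` in an arbitrary ring. -/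
noncomputable def factorialSchur (lam : Fin n → ℕ) (y : ℤ → K) : MvPolynomial (Fin n) K :=
  ∑ T with IsSSYT lam T, ∏ c : cells lam, (X (T c) + C (y (ysub (T c) c)))

variable (K) in
/-- The Schur polynomial `s_lam(x)` over an arbitrary ring. -/
noncomputable def schurPoly (lam : Fin n → ℕ) : MvPolynomial (Fin n) K :=
  ∑ T with IsSSYT lam T, ∏ c : cells lam, X (T c)

lemma factorialSchur_zero (lam : Fin n → ℕ) : factorialSchur lam (0 : ℤ → K) = schurPoly K lam := by
  simp [factorialSchur, schurPoly]

lemma rename_swap_sum_truncWeight (hlam : IsPartition lam) {k k' : Fin n} (hk : (k' : ℕ) = k + 1)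
    {j : ℕ} {T₀ : cells lam → Fin n} (hT : IsSSYT lam T₀) (hcol : IsPaired k k' j T₀) (y : ℤ → K) :
    rename (Equiv.swap k k') (∑ T with IsSSYT lam T ∧ blur k k' j T = blur k k' j T₀,
        truncWeight X (fun m => C (y m)) j T) =
      ∑ T with IsSSYT lam T ∧ blur k k' j T = blur k k' j T₀,
        truncWeight X (fun m => C (y m)) j T := by
  simpa only [truncWeight, map_sum, map_prod, map_add, rename_X, rename_C, Function.comp_apply]
    using sum_truncWeight_swap hlam hk hT hcol X fun m => (C (y m) : MvPolynomial (Fin n) K)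

lemma rename_swap_factorialSchur (hlam : IsPartition lam) (y : ℤ → K) {k k' : Fin n}
    (hk : (k' : ℕ) = k + 1) :
    rename (Equiv.swap k k') (factorialSchur lam y) = factorialSchur lam y := by
  have hweight (T : cells lam → Fin n) : ∏ c : cells lam, (X (T c) + C (y (ysub (T c) c))) =
      truncWeight X (fun m => C (y m)) (univ.sup lam) T := by
    rw [truncWeight, filter_true_of_mem fun c _ => col_lt_sup c]
  have hpaired (T : cells lam → Fin n) : IsPaired k k' (univ.sup lam) T :=
    fun c hc => absurd (col_lt_sup c) hc.not_lt
  rw [← sub_eq_zero, factorialSchur]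
  simp only [hweight]
  rw [map_sum, ← sum_sub_distrib]
  refine sum_cancels_of_partition_cancels (Setoid.ker (blur k k' (univ.sup lam))) fun T₀ hT₀ => ?_
  simp only [Setoid.ker_def, filter_filter]
  rw [sum_sub_distrib, ← map_sum, sub_eq_zero]
  exact rename_swap_sum_truncWeight hlam hk (mem_filter.1 hT₀).2 (hpaired T₀) y

theorem factorialSchur_isSymmetric (hlam : IsPartition lam) (y : ℤ → K) :
    (factorialSchur lam y).IsSymmetric := by
  obtain _ | n := n
  · intro τ
    rw [Subsingleton.elim τ (Equiv.refl _), Equiv.coe_refl, rename_id_apply]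
  intro τ
  have hτ : τ ∈ Submonoid.closure (Set.range fun i : Fin n => Equiv.swap i.castSucc i.succ) := by
    rw [Equiv.Perm.mclosure_swap_castSucc_succ]
    trivial
  induction hτ using Submonoid.closure_induction with
  | mem τ hτ =>
    obtain ⟨i, rfl⟩ := hτ
    exact rename_swap_factorialSchur hlam y (by simp)
  | one => exact rename_id_apply _
  | mul τ₁ τ₂ _ _ h₁ h₂ => rw [Equiv.Perm.coe_mul, ← rename_rename, h₂, h₁]

end FactorialSchur

section BarredWeight

lemma sum_prod_filter_pi {ι α β R : Type*} [Fintype ι] [Fintype α] [Fintype β] [CommSemiring R]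
    (S : Finset (ι → α)) (t : ι → Finset β) (g : ι → α × β → R) :
    ∑ T : ι → α × β with (fun i => (T i).1) ∈ S ∧ ∀ i, (T i).2 ∈ t i, ∏ i, g i (T i) =
      ∑ T ∈ S, ∏ i, ∑ b ∈ t i, g i (T i, b) := by
  simp only [prod_univ_sum]
  rw [← sum_product']
  refine sum_nbij' (fun T => (fun i => (T i).1, fun i => (T i).2)) (fun p i => (p.1 i, p.2 i))
    ?_ ?_ (fun _ _ => rfl) (fun _ _ => rfl) (fun _ _ => rfl) <;> simp [Fintype.mem_piFinset]

variable {n : ℕ} {K : Type*} [CommRing K] {lam : Fin n → ℕ}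

lemma isBarred_iff {T : cells lam → Fin n × Bool} :
    IsBarred lam T ↔ IsSSYT lam fun c => (T c).1 :=
  Iff.rfl

/-- The weight of an entry in cell `c` of a barred tableau: a barred entry contributes its
`y`-variable, an unbarred one its `x`-variable. -/
noncomputable def cellWeight (y : ℤ → K) (c : cells lam) (a : Fin n × Bool) :
    MvPolynomial (Fin n) K :=
  if a.2 = true then C (y (ysub a.1 c)) else X a.1

lemma sum_cellWeight (y : ℤ → K) (c : cells lam) (v : Fin n) :
    ∑ b : Bool, cellWeight y c (v, b) = X v + C (y (ysub v c)) := by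
  simp [cellWeight, add_comm]

/-- The product of the parameters of the barred entries of `T`. -/
noncomputable def barMonomial (y : ℤ → K) (T : cells lam → Fin n × Bool) : K :=
  ∏ c with (T c).2 = true, y (ysub (T c).1 c)

lemma factorialSchur_eq_sum_isBarred (lam : Fin n → ℕ) (y : ℤ → K) :
    factorialSchur lam y = ∑ T with IsBarred lam T, ∏ c, cellWeight y c (T c) := by
  simp only [factorialSchur, ← sum_cellWeight]
  rw [← sum_prod_filter_pi]
  refine sum_congr ?_ fun _ _ => rfl
  ext T
  simp only [isBarred_iff, mem_filter, mem_univ, true_and, implies_true, and_true]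

variable (K) in
/-- The monomial `x^(ν + ρ)`, whose alternation is the alternant `a_(ν + ρ)`. -/
noncomputable def rhoMonomial (ν : Fin n → ℕ) : MvPolynomial (Fin n) K :=
  ∏ i, X i ^ (ν i + rhoPart n i)

lemma rename_swap_rhoMonomial {ν : Fin n → ℕ} {k k' : Fin n} (hk : (k' : ℕ) = k + 1)
    (hν : ν k' = ν k + 1) :
    rename (Equiv.swap k k') (rhoMonomial K ν) = rhoMonomial K ν := by
  have hexp : ν k' + rhoPart n k' = ν k + rhoPart n k := by
    have := k'.2
    unfold rhoPart
    omega
  simp only [rhoMonomial, map_prod, map_pow, rename_X]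
  refine Fintype.prod_equiv (Equiv.swap k k') _ _ fun i => ?_
  obtain rfl | hik := eq_or_ne i k
  · rw [Equiv.swap_apply_left, hexp]
  obtain rfl | hik' := eq_or_ne i k'
  · rw [Equiv.swap_apply_right, hexp]
  · rw [Equiv.swap_apply_of_ne_of_ne hik hik']

/-- `ν` plus the unbarred content of the columns `≥ j` of `T`, i.e. of the part of `T` that the
column word has read before reaching column `j - 1`. -/
noncomputable def suffixCount (ν : Fin n → ℕ) (T : cells lam → Fin n × Bool) (j : ℕ) (k : Fin n) :
    ℕ :=
  ν k + #{c : cells lam | j ≤ c.1.2 ∧ T c = (k, false)}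

lemma rhoMonomial_mul_prod_cellWeight (y : ℤ → K) (ν : Fin n → ℕ) (T : cells lam → Fin n × Bool)
    (j : ℕ) :
    rhoMonomial K ν * ∏ c with j ≤ c.1.2, cellWeight y c (T c) =
      C (∏ c with j ≤ c.1.2 ∧ (T c).2 = true, y (ysub (T c).1 c)) *
        rhoMonomial K (suffixCount ν T j) := by
  have hunbarred : ∏ c with j ≤ c.1.2 ∧ ¬(T c).2 = true, (X (T c).1 : MvPolynomial (Fin n) K) =
      ∏ i, X i ^ #{c : cells lam | j ≤ c.1.2 ∧ T c = (i, false)} := by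
    rw [← prod_fiberwise' _ (fun c => (T c).1) X]
    refine prod_congr rfl fun i _ => ?_
    rw [prod_const, filter_filter]
    congr 2
    ext c
    simp only [mem_filter, mem_univ, true_and, Prod.ext_iff, Bool.not_eq_true]
    tauto
  simp only [cellWeight, prod_ite, filter_filter]
  rw [hunbarred, ← map_prod, mul_left_comm]
  simp only [rhoMonomial, suffixCount, ← prod_mul_distrib, ← pow_add, add_right_comm]

lemma alternation_rhoMonomial_mul (y : ℤ → K) (ν : Fin n → ℕ) (T : cells lam → Fin n × Bool) :
    alternation (rhoMonomial K ν * ∏ c, cellWeight y c (T c)) =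
      C (barMonomial y T) * alternation (rhoMonomial K (suffixCount ν T 0)) := by
  have h := rhoMonomial_mul_prod_cellWeight y ν T 0
  simp only [Nat.zero_le, filter_true, true_and] at h
  rw [h, alternation_C_mul, barMonomial]

end BarredWeight

section Cancellation

variable {n : ℕ} {K : Type*} [CommRing K] {lam : Fin n → ℕ} {ν : Fin n → ℕ}

lemma antitone_of_val_succ {f : Fin n → ℕ} (h : ∀ k k' : Fin n, (k' : ℕ) = k + 1 → f k' ≤ f k) :
    Antitone f := by
  obtain _ | n := n
  · exact Subsingleton.antitone f
  · exact Fin.antitone_iff_succ_le.2 fun i => h _ _ (by simp)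

/-- The column word of `T` never leaves the dominant chamber when started at `ν`. -/
def IsGood (ν : Fin n → ℕ) (T : cells lam → Fin n × Bool) : Prop :=
  ∀ j, Antitone (suffixCount ν T j)

/-- The first failure of `IsGood` is met at column `j` (columns being read from the right), and
`k`, `k' = k + 1` are the smallest values for which it occurs there. -/
structure IsCritical (ν : Fin n → ℕ) (T : cells lam → Fin n × Bool) (j : ℕ) (k k' : Fin n) :
    Prop where
  val_succ : (k' : ℕ) = k + 1
  lt : suffixCount ν T j k < suffixCount ν T j k'
  antitone : ∀ i, j < i → Antitone (suffixCount ν T i)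
  le : ∀ l l' : Fin n, (l' : ℕ) = l + 1 → suffixCount ν T j l < suffixCount ν T j l' → k ≤ l

lemma suffixCount_of_sup_le (ν : Fin n → ℕ) (T : cells lam → Fin n × Bool) {j : ℕ}
    (hj : univ.sup lam ≤ j) : suffixCount ν T j = ν := by
  funext k
  rw [suffixCount, Nat.add_eq_left, card_eq_zero, filter_eq_empty_iff]
  exact fun c _ h => (hj.trans h.1).not_gt (col_lt_sup c)

lemma suffixCount_succ (ν : Fin n → ℕ) (T : cells lam → Fin n × Bool) (j : ℕ) (k : Fin n) :
    suffixCount ν T j k =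
      suffixCount ν T (j + 1) k + #{c : cells lam | c.1.2 = j ∧ T c = (k, false)} := by
  rw [suffixCount, suffixCount, add_assoc, ← card_union_of_disjoint, ← filter_or]
  · congr 2
    ext c
    simp only [mem_filter, mem_univ, true_and]
    grind
  · refine disjoint_filter.2 fun c _ h h' => ?_
    omega

lemma suffixCount_congr {T T' : cells lam → Fin n × Bool} {j : ℕ}
    (h : ∀ c : cells lam, j ≤ c.1.2 → T c = T' c) {i : ℕ} (hi : j ≤ i) :
    suffixCount ν T i = suffixCount ν T' i := by
  funext k
  rw [suffixCount, suffixCount]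
  congr 2
  ext c
  simp only [mem_filter, mem_univ, true_and]
  exact and_congr_right fun hc => by rw [h c (hi.trans hc)]

lemma exists_isCritical (hν : Antitone ν) {T : cells lam → Fin n × Bool} (hT : ¬IsGood ν T) :
    ∃ j ≤ univ.sup lam, ∃ k k', IsCritical ν T j k k' := by
  obtain ⟨j₀, hj₀⟩ := not_forall.1 hT
  have hle (j : ℕ) (hj : ¬Antitone (suffixCount ν T j)) : j ≤ univ.sup lam := by
    by_contra! hlt
    exact hj (by rwa [suffixCount_of_sup_le ν T hlt.le])
  let P (j : ℕ) : Prop := ¬Antitone (suffixCount ν T j)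
  have hj : P (Nat.findGreatest P (univ.sup lam)) := Nat.findGreatest_spec (hle j₀ hj₀) hj₀
  generalize hjdef : Nat.findGreatest P (univ.sup lam) = j at hj
  let bad : Set (Fin n) :=
    {k | ∃ k' : Fin n, (k' : ℕ) = k + 1 ∧ suffixCount ν T j k < suffixCount ν T j k'}
  have hbad : bad.Nonempty := by
    by_contra hempty
    refine hj (antitone_of_val_succ fun k k' hk => ?_)
    by_contra! hlt
    exact hempty ⟨k, k', hk, hlt⟩
  obtain ⟨k, ⟨k', hk, hlt⟩, hmin⟩ := wellFounded_lt.has_min bad hbad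
  refine ⟨j, hle j hj, k, k', hk, hlt, fun i hi => ?_, fun l l' hl h => ?_⟩
  · by_contra hanti
    exact hi.not_ge (hjdef ▸ Nat.le_findGreatest (hle i hanti) hanti)
  · exact not_lt.1 (hmin l ⟨l', hl, h⟩)

lemma IsCritical.not_isGood {T : cells lam → Fin n × Bool} {j : ℕ} {k k' : Fin n}
    (h : IsCritical ν T j k k') : ¬IsGood ν T := fun hgood =>
  (hgood j (Fin.le_def.2 (by rw [h.val_succ]; omega))).not_gt h.lt

lemma IsCritical.unique {T : cells lam → Fin n × Bool} {i j : ℕ} {k k' l l' : Fin n}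
    (h : IsCritical ν T i k k') (h' : IsCritical ν T j l l') : i = j ∧ k = l ∧ k' = l' := by
  have hle {i j : ℕ} {k k' l l' : Fin n} (h : IsCritical ν T i k k') (h' : IsCritical ν T j l l') :
      i ≤ j := by
    by_contra! hlt
    exact (h'.antitone i hlt (Fin.le_def.2 (by rw [h.val_succ]; omega))).not_gt h.lt
  obtain rfl := (hle h h').antisymm (hle h' h)
  obtain rfl := (h.le l l' h'.val_succ h'.lt).antisymm (h'.le k k' h.val_succ h.lt)
  exact ⟨rfl, rfl, Fin.ext (h.val_succ.trans h'.val_succ.symm)⟩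

lemma IsCritical.congr {T T' : cells lam → Fin n × Bool} {j : ℕ} {k k' : Fin n}
    (hT : IsCritical ν T j k k') (h : ∀ c : cells lam, j ≤ c.1.2 → T c = T' c) :
    IsCritical ν T' j k k' where
  val_succ := hT.val_succ
  lt := suffixCount_congr h le_rfl ▸ hT.lt
  antitone i hi := suffixCount_congr h hi.le ▸ hT.antitone i hi
  le := suffixCount_congr h le_rfl ▸ hT.le

lemma IsSSYT.eq_of_col_eq {T : cells lam → Fin n} (hT : IsSSYT lam T) {c d : cells lam}
    (hcol : c.1.2 = d.1.2) (hval : T c = T d) : c = d := by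
  obtain hlt | heq | hlt := lt_trichotomy c.1.1 d.1.1
  · exact absurd hval (hT.2 c d hcol hlt).ne
  · exact Subtype.ext (Prod.ext heq hcol)
  · exact absurd hval (hT.2 d c hcol.symm hlt).ne'

lemma IsCritical.exists_cell_and_suffixCount_eq {T : cells lam → Fin n × Bool}
    (hT : IsBarred lam T) {j : ℕ} {k k' : Fin n} (h : IsCritical ν T j k k') :
    (∃ d : cells lam, d.1.2 = j ∧ (T d).1 = k') ∧
      suffixCount ν T j k' = suffixCount ν T j k + 1 := by
  have hanti : suffixCount ν T (j + 1) k' ≤ suffixCount ν T (j + 1) k :=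
    h.antitone (j + 1) (Nat.lt_succ_self j) (Fin.le_def.2 (by rw [h.val_succ]; omega))
  have hlt := h.lt
  have hk := suffixCount_succ ν T j k
  have hk' := suffixCount_succ ν T j k'
  have hle : #{c : cells lam | c.1.2 = j ∧ T c = (k', false)} ≤ 1 := by
    refine card_le_one.2 fun c hc d hd => ?_
    obtain ⟨-, hcj, hc⟩ := mem_filter.1 hc
    obtain ⟨-, hdj, hd⟩ := mem_filter.1 hd
    exact (isBarred_iff.1 hT).eq_of_col_eq (hcj.trans hdj.symm) (by rw [hc, hd])
  obtain ⟨d, hd⟩ : (univ.filter fun c : cells lam => c.1.2 = j ∧ T c = (k', false)).Nonempty :=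
    card_pos.1 (by omega)
  obtain ⟨-, hdj, hd⟩ := mem_filter.1 hd
  exact ⟨⟨d, hdj, by rw [hd]⟩, by omega⟩

/-- The part of a barred tableau that is kept by the cancellation at column `j` and values `k`,
`k'`: the bars are forgotten in the first `j` columns, and so is the difference between `k` and
`k'`. -/
def barredBlur (k k' : Fin n) (j : ℕ) (T : cells lam → Fin n × Bool) (c : cells lam) :
    Fin n × Bool :=
  (blur k k' j (fun c => (T c).1) c, decide (j ≤ c.1.2) && (T c).2)

lemma barredBlur_eq_iff {k k' : Fin n} {j : ℕ} {T T₀ : cells lam → Fin n × Bool} :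
    barredBlur k k' j T = barredBlur k k' j T₀ ↔
      blur k k' j (fun c => (T c).1) = blur k k' j (fun c => (T₀ c).1) ∧
        ∀ c : cells lam, (T c).2 ∈ if j ≤ c.1.2 then {(T₀ c).2} else univ := by
  simp only [funext_iff, barredBlur, Prod.mk.injEq, forall_and]
  refine and_congr_right fun _ => forall_congr' fun c => ?_
  split_ifs with h <;> simp [h]

lemma eq_of_barredBlur_eq {k k' : Fin n} {j : ℕ} {T T₀ : cells lam → Fin n × Bool}
    (h : barredBlur k k' j T = barredBlur k k' j T₀) {c : cells lam} (hj : j ≤ c.1.2) :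
    T c = T₀ c := by
  have hc := congrFun h c
  simpa [barredBlur, blur, hj, hj.not_gt, ← Prod.ext_iff] using hc

lemma sum_barredBlur_fibre (y : ℤ → K) (k k' : Fin n) (j : ℕ) (T₀ : cells lam → Fin n × Bool) :
    ∑ T with IsBarred lam T ∧ barredBlur k k' j T = barredBlur k k' j T₀,
        ∏ c, cellWeight y c (T c) =
      (∏ c with j ≤ c.1.2, cellWeight y c (T₀ c)) *
        ∑ T with IsSSYT lam T ∧ blur k k' j T = blur k k' j (fun c => (T₀ c).1),
          truncWeight X (fun m => C (y m)) j T := by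
  have hcolumns (T : cells lam → Fin n)
      (hT : T ∈ univ.filter fun T =>
        IsSSYT lam T ∧ blur k k' j T = blur k k' j (fun c => (T₀ c).1)) :
      (∏ c with j ≤ c.1.2, cellWeight y c (T₀ c)) * truncWeight X (fun m => C (y m)) j T =
        ∏ c : cells lam, ∑ b ∈ if j ≤ c.1.2 then {(T₀ c).2} else univ,
          cellWeight y c (T c, b) := by
    have hT (c : cells lam) (hc : j ≤ c.1.2) : T c = (T₀ c).1 := by
      simpa [blur, hc.not_gt] using congrFun (mem_filter.1 hT).2.2 c
    rw [← prod_filter_mul_prod_filter_not univ fun c : cells lam => j ≤ c.1.2]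
    simp only [truncWeight, not_le]
    congr 1 <;> refine prod_congr rfl fun c hc => ?_
    · have hc := (mem_filter.1 hc).2
      rw [if_pos hc, sum_singleton, hT c hc]
    · rw [if_neg (mem_filter.1 hc).2.not_ge, sum_cellWeight]
  rw [mul_sum, sum_congr rfl hcolumns, ← sum_prod_filter_pi]
  refine sum_congr ?_ fun _ _ => rfl
  ext T
  simp only [mem_filter, mem_univ, true_and, isBarred_iff, barredBlur_eq_iff, and_assoc]

lemma alternation_sum_barredBlur_fibre (hlam : IsPartition lam) (y : ℤ → K) {j : ℕ} {k k' : Fin n}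
    {T₀ : cells lam → Fin n × Bool} (hT₀ : IsBarred lam T₀) (hcrit : IsCritical ν T₀ j k k') :
    alternation (rhoMonomial K ν *
      ∑ T with IsBarred lam T ∧ barredBlur k k' j T = barredBlur k k' j T₀,
        ∏ c, cellWeight y c (T c)) = 0 := by
  obtain ⟨⟨d, hdj, hd⟩, hcount⟩ := hcrit.exists_cell_and_suffixCount_eq hT₀
  have hk := hcrit.val_succ
  have hne : k ≠ k' := fun h => by rw [h] at hk; omega
  refine alternation_eq_zero_of_rename_swap hne ?_
  rw [sum_barredBlur_fibre, ← mul_assoc, rhoMonomial_mul_prod_cellWeight, map_mul, map_mul,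
    rename_C, rename_swap_rhoMonomial hk hcount,
    rename_swap_sum_truncWeight hlam hk hT₀ fun _ _ _ => ⟨d, hdj, hd⟩]

lemma sum_isCritical_eq_zero (hlam : IsPartition lam) (y : ℤ → K) (j : ℕ) (k k' : Fin n) :
    ∑ T : cells lam → Fin n × Bool with IsBarred lam T ∧ IsCritical ν T j k k',
      alternation (rhoMonomial K ν * ∏ c, cellWeight y c (T c)) = 0 := by
  refine sum_cancels_of_partition_cancels (Setoid.ker (barredBlur k k' j)) fun T₀ hT₀ => ?_
  obtain ⟨-, hT₀, hcrit⟩ := mem_filter.1 hT₀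
  rw [← alternation_sum_barredBlur_fibre hlam y hT₀ hcrit, mul_sum, map_sum, filter_filter]
  refine sum_congr ?_ fun _ _ => rfl
  ext T
  simp only [mem_filter, mem_univ, true_and, Setoid.ker_def]
  refine ⟨fun h => ⟨h.1.1, h.2⟩, fun h => ⟨⟨h.1, hcrit.congr fun c hc => ?_⟩, h.2⟩⟩
  exact (eq_of_barredBlur_eq h.2 hc).symm

theorem alternation_mul_factorialSchur (hlam : IsPartition lam) (y : ℤ → K) (hν : Antitone ν) :
    alternation (rhoMonomial K ν) * factorialSchur lam y =
      ∑ T : cells lam → Fin n × Bool with IsBarred lam T ∧ IsGood ν T,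
        C (barMonomial y T) * alternation (rhoMonomial K (suffixCount ν T 0)) := by
  have hbad : (univ.filter fun T : cells lam → Fin n × Bool => IsBarred lam T ∧ ¬IsGood ν T) =
      (range (univ.sup lam + 1) ×ˢ univ).biUnion fun p : ℕ × Fin n × Fin n =>
        univ.filter fun T => IsBarred lam T ∧ IsCritical ν T p.1 p.2.1 p.2.2 := by
    ext T
    simp only [mem_filter, mem_univ, true_and, mem_biUnion, mem_product, mem_range, and_true]
    constructor
    · rintro ⟨hT, hgood⟩
      obtain ⟨j, hj, k, k', h⟩ := exists_isCritical hν hgood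
      exact ⟨(j, k, k'), Nat.lt_succ_iff.2 hj, hT, h⟩
    · rintro ⟨p, -, hT, h⟩
      exact ⟨hT, h.not_isGood⟩
  rw [alternation_mul_of_isSymmetric _ (factorialSchur_isSymmetric hlam y),
    factorialSchur_eq_sum_isBarred, mul_sum, map_sum,
    ← sum_filter_add_sum_filter_not _ (IsGood ν), filter_filter, filter_filter, hbad, sum_biUnion]
  · rw [sum_eq_zero fun p _ => sum_isCritical_eq_zero hlam y _ _ _, add_zero]
    simp only [alternation_rhoMonomial_mul]
  · refine fun p _ q _ hpq => disjoint_filter.2 fun T _ hp hq => hpq ?_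
    obtain ⟨h₁, h₂, h₃⟩ := hp.2.unique hq.2
    exact Prod.ext h₁ (Prod.ext h₂ h₃)

end Cancellation

section Words

variable {n : ℕ}

/-- The number of occurrences of each letter `k < n` in the word `w`. -/
def wordContent (n : ℕ) (w : List ℕ) (k : Fin n) : ℕ :=
  w.count (k : ℕ)

lemma isYam_nil : IsYam [] := fun t k => by simp

lemma isYam_iff_prefix {w : List ℕ} :
    IsYam w ↔ ∀ p, p <+: w → ∀ k, p.count (k + 1) ≤ p.count k := by
  refine ⟨fun h p hp k => ?_, fun h t => h _ (List.take_prefix t w)⟩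
  simpa [← List.prefix_iff_eq_take.1 hp] using h p.length k

lemma IsYam.of_append {w l : List ℕ} (h : IsYam (w ++ l)) : IsYam w :=
  isYam_iff_prefix.2 fun p hp => isYam_iff_prefix.1 h p (hp.trans (List.prefix_append w l))

lemma IsYam.antitone_count {w : List ℕ} (h : IsYam w) : Antitone fun k => w.count k :=
  antitone_nat_of_succ_le (isYam_iff_prefix.1 h w List.prefix_rfl)

lemma IsYam.antitone_wordContent {w : List ℕ} (h : IsYam w) : Antitone (wordContent n w) :=
  fun _ _ hkl => h.antitone_count (Fin.le_def.1 hkl)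

lemma isYam_append_iff {w l : List ℕ} (hl : l.Pairwise (· < ·)) (hln : ∀ a ∈ l, a < n) :
    IsYam (w ++ l) ↔ IsYam w ∧ Antitone (wordContent n (w ++ l)) := by
  refine ⟨fun h => ⟨h.of_append, h.antitone_wordContent⟩, fun ⟨hw, hanti⟩ => ?_⟩
  refine isYam_iff_prefix.2 fun p hp k => ?_
  obtain ⟨s, hs⟩ := hp
  obtain ⟨a, rfl, -⟩ | ⟨q, rfl, rfl⟩ := List.append_eq_append_iff.1 hs
  · exact isYam_iff_prefix.1 hw p (List.prefix_append p a) k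
  · have hwk : w.count (k + 1) ≤ w.count k := hw.antitone_count (Nat.le_succ k)
    by_cases hk : k + 1 ∈ q
    · have hs : k ∉ s := fun hks => by
        have := (List.pairwise_append.1 hl).2.2 _ hk _ hks
        omega
      have hkn := hln _ (List.mem_append_left s hk)
      have := @hanti ⟨k, by omega⟩ ⟨k + 1, hkn⟩ (Fin.le_def.2 (Nat.le_succ k))
      simp only [wordContent, List.count_append, List.count_eq_zero.2 hs] at this
      simpa only [List.count_append] using by omega
    · rw [List.count_append, List.count_append, List.count_eq_zero.2 hk]
      omega

end Words

section ColumnWords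

variable {n : ℕ} {lam : Fin n → ℕ} {T : cells lam → Fin n × Bool}

/-- The part of the unbarred column word read in column `j`. -/
noncomputable def columnWord (T : cells lam → Fin n × Bool) (j : ℕ) : List ℕ :=
  (List.finRange n).filterMap fun i =>
    if h : (i, j) ∈ cells lam then
      (if (T ⟨(i, j), h⟩).2 = false then some ((T ⟨(i, j), h⟩).1 : ℕ) else none)
    else none

/-- The part of the unbarred column word read in the columns `≥ j`. -/
noncomputable def suffixWord (T : cells lam → Fin n × Bool) (j : ℕ) : List ℕ :=
  (List.range' j (univ.sup lam - j)).reverse.flatMap (columnWord T)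

lemma mem_columnWord {j a : ℕ} :
    a ∈ columnWord T j ↔ ∃ c : cells lam, c.1.2 = j ∧ (T c).2 = false ∧ ((T c).1 : ℕ) = a := by
  rw [columnWord, List.mem_filterMap]
  constructor
  · rintro ⟨i, -, h⟩
    split_ifs at h with hc hbar
    exact ⟨⟨(i, j), hc⟩, rfl, hbar, Option.some.inj h⟩
  · rintro ⟨⟨⟨i, _⟩, hc⟩, rfl, hbar, ha⟩
    exact ⟨i, List.mem_finRange i, by rw [dif_pos hc, if_pos hbar, ha]⟩

lemma lt_of_mem_columnWord {j a : ℕ} (ha : a ∈ columnWord T j) : a < n := by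
  obtain ⟨c, -, -, rfl⟩ := mem_columnWord.1 ha
  exact (T c).1.isLt

lemma IsBarred.pairwise_columnWord (hT : IsBarred lam T) (j : ℕ) :
    (columnWord T j).Pairwise (· < ·) := by
  rw [columnWord, List.pairwise_filterMap]
  refine (List.pairwise_lt_finRange n).imp fun {a b} hab x hx z hz => ?_
  split_ifs at hx hz with ha _ hb
  simp only [Option.some.injEq] at hx hz
  rw [← hx, ← hz]
  exact Fin.lt_def.1 (hT.2 ⟨(a, j), ha⟩ ⟨(b, j), hb⟩ rfl hab)

lemma IsBarred.wordContent_columnWord (hT : IsBarred lam T) (j : ℕ) (k : Fin n) :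
    wordContent n (columnWord T j) k = #{c : cells lam | c.1.2 = j ∧ T c = (k, false)} := by
  have hmem : (k : ℕ) ∈ columnWord T j ↔ ∃ c : cells lam, c.1.2 = j ∧ T c = (k, false) := by
    simp only [mem_columnWord, Prod.ext_iff, Fin.ext_iff, and_comm]
  rw [wordContent]
  by_cases hk : (k : ℕ) ∈ columnWord T j
  · rw [List.count_eq_one_of_mem ((hT.pairwise_columnWord j).imp fun h => ne_of_lt h) hk]
    obtain ⟨c, hcj, hc⟩ := hmem.1 hk
    refine (card_eq_one.2 ⟨c, eq_singleton_iff_unique_mem.2 ⟨by simp [hcj, hc], ?_⟩⟩).symm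
    intro d hd
    obtain ⟨-, hdj, hd⟩ := mem_filter.1 hd
    exact (isBarred_iff.1 hT).eq_of_col_eq (hdj.trans hcj.symm) (by rw [hc, hd])
  · rw [List.count_eq_zero.2 hk, eq_comm, card_eq_zero, filter_eq_empty_iff]
    exact fun c _ hc => hk (hmem.2 ⟨c, hc⟩)

lemma suffixWord_of_sup_le (T : cells lam → Fin n × Bool) {j : ℕ} (hj : univ.sup lam ≤ j) :
    suffixWord T j = [] := by
  simp [suffixWord, Nat.sub_eq_zero_of_le hj]

lemma suffixWord_eq_append (T : cells lam → Fin n × Bool) (j : ℕ) :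
    suffixWord T j = suffixWord T (j + 1) ++ columnWord T j := by
  obtain hj | hj := le_or_gt (univ.sup lam) j
  · have hcol : columnWord T j = [] := List.eq_nil_iff_forall_not_mem.2 fun a ha => by
      obtain ⟨c, hc, -⟩ := mem_columnWord.1 ha
      exact hj.not_gt (hc ▸ col_lt_sup c)
    rw [suffixWord_of_sup_le T hj, suffixWord_of_sup_le T (by omega), hcol, List.append_nil]
  · obtain ⟨l, hl⟩ : ∃ l, univ.sup lam - j = l + 1 := ⟨univ.sup lam - (j + 1), by omega⟩
    have hl' : univ.sup lam - (j + 1) = l := by omega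
    simp [suffixWord, hl, hl', List.range'_succ]

lemma suffixWord_zero (T : cells lam → Fin n × Bool) : suffixWord T 0 = colWord1 lam T := by
  rw [suffixWord, Nat.sub_zero, ← List.range_eq_range']
  rfl

lemma decreasing_induction_of_ge {P : ℕ → Prop} {N : ℕ} (ge : ∀ j, N ≤ j → P j)
    (of_succ : ∀ j, P (j + 1) → P j) (j : ℕ) : P j :=
  Nat.decreasingInduction (motive := fun j _ => P j) (fun j _ => of_succ j)
    (ge _ (le_max_right j N)) (le_max_left j N)

lemma IsBarred.wordContent_append_suffixWord (hT : IsBarred lam T) (w : List ℕ) (j : ℕ) :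
    wordContent n (w ++ suffixWord T j) = suffixCount (wordContent n w) T j := by
  induction j using decreasing_induction_of_ge (N := univ.sup lam) with
  | ge j hj => rw [suffixWord_of_sup_le T hj, suffixCount_of_sup_le _ T hj, List.append_nil]
  | of_succ j ih =>
    funext k
    rw [suffixCount_succ, ← ih, ← hT.wordContent_columnWord, suffixWord_eq_append]
    simp only [wordContent, List.count_append, add_assoc]

lemma IsBarred.isYam_append_suffixWord_iff (hT : IsBarred lam T) (w : List ℕ) (j : ℕ) :
    IsYam (w ++ suffixWord T j) ↔
      IsYam w ∧ ∀ i, j ≤ i → Antitone (suffixCount (wordContent n w) T i) := by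
  induction j using decreasing_induction_of_ge (N := univ.sup lam) with
  | ge j hj =>
    rw [suffixWord_of_sup_le T hj, List.append_nil]
    refine ⟨fun h => ⟨h, fun i hi => ?_⟩, And.left⟩
    rw [suffixCount_of_sup_le _ T (hj.trans hi)]
    exact h.antitone_wordContent
  | of_succ j ih =>
    rw [suffixWord_eq_append, ← List.append_assoc, isYam_append_iff (hT.pairwise_columnWord j)
      fun _ => lt_of_mem_columnWord, ih, List.append_assoc, ← suffixWord_eq_append,
      hT.wordContent_append_suffixWord, and_assoc]
    refine and_congr_right fun _ => ⟨fun h i hi => ?_, fun h => ⟨fun i hi => h i ?_, h j le_rfl⟩⟩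
    · obtain rfl | hi := hi.eq_or_lt
      · exact h.2
      · exact h.1 i hi
    · omega

lemma IsBarred.isYam_append_colWord1_iff (hT : IsBarred lam T) (w : List ℕ) :
    IsYam (w ++ colWord1 lam T) ↔ IsYam w ∧ IsGood (wordContent n w) T := by
  simp only [← suffixWord_zero, hT.isYam_append_suffixWord_iff, Nat.zero_le, true_imp_iff, IsGood]

lemma IsBarred.wordContent_append_colWord1 (hT : IsBarred lam T) (w : List ℕ) :
    wordContent n (w ++ colWord1 lam T) = suffixCount (wordContent n w) T 0 := by
  rw [← suffixWord_zero, hT.wordContent_append_suffixWord]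

lemma IsBarredSkew.wordContent_colWord {r : ℕ} {lam : Fin r → Fin n → ℕ}
    {T : (i : Fin r) → cells (lam i) → Fin n × Bool} (hT : IsBarredSkew lam T) :
    wordContent n (colWord lam T) = contentT lam T := by
  funext k
  rw [wordContent, colWord, contentT, List.count_flatMap, ← List.ofFn_eq_map, List.sum_ofFn]
  refine sum_congr rfl fun i _ => ?_
  have h := congrFun ((hT i).wordContent_append_colWord1 []) k
  simpa [wordContent, suffixCount, content1] using h

end ColumnWords

section ProductExpansion

variable {n : ℕ} {K : Type*} [CommRing K]

lemma alternation_mul_factorialSchur_eq_sum_isYam {lam : Fin n → ℕ} (hlam : IsPartition lam)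
    (y : ℤ → K) {w : List ℕ} (hw : IsYam w) :
    alternation (rhoMonomial K (wordContent n w)) * factorialSchur lam y =
      ∑ T : cells lam → Fin n × Bool with IsBarred lam T ∧ IsYam (w ++ colWord1 lam T),
        C (barMonomial y T) *
          alternation (rhoMonomial K (wordContent n (w ++ colWord1 lam T))) := by
  rw [alternation_mul_factorialSchur hlam y hw.antitone_wordContent]
  refine sum_congr ?_ fun T hT => ?_
  · ext T
    simp only [mem_filter, mem_univ, true_and]
    exact and_congr_right fun hT => by simp only [hT.isYam_append_colWord1_iff, hw, true_and]
  · rw [IsBarred.wordContent_append_colWord1 (mem_filter.1 hT).2.1]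

lemma isBarredSkew_succ_iff {r : ℕ} {lam : Fin (r + 1) → Fin n → ℕ}
    {T : (i : Fin (r + 1)) → cells (lam i) → Fin n × Bool} :
    IsBarredSkew lam T ↔
      IsBarred (lam 0) (T 0) ∧ IsBarredSkew (fun i => lam i.succ) fun i => T i.succ :=
  Fin.forall_fin_succ

lemma colWord_succ {r : ℕ} (lam : Fin (r + 1) → Fin n → ℕ)
    (T : (i : Fin (r + 1)) → cells (lam i) → Fin n × Bool) :
    colWord lam T =
      colWord1 (lam 0) (T 0) ++ colWord (fun i => lam i.succ) fun i => T i.succ := by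
  rw [colWord, List.finRange_succ, List.flatMap_cons, List.flatMap_map, colWord]

theorem alternation_mul_prod_factorialSchur {r : ℕ} {lam : Fin r → Fin n → ℕ}
    (hlam : ∀ i, IsPartition (lam i)) (y : Fin r → ℤ → K) {w : List ℕ} (hw : IsYam w) :
    alternation (rhoMonomial K (wordContent n w)) * ∏ i, factorialSchur (lam i) (y i) =
      ∑ T : (i : Fin r) → cells (lam i) → Fin n × Bool with
          IsBarredSkew lam T ∧ IsYam (w ++ colWord lam T),
        C (∏ i, barMonomial (y i) (T i)) *
          alternation (rhoMonomial K (wordContent n (w ++ colWord lam T))) := by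
  induction r generalizing w with
  | zero => simp [IsBarredSkew, colWord, hw, filter_true_of_mem]
  | succ r ih =>
    rw [Fin.prod_univ_succ, ← mul_assoc,
      alternation_mul_factorialSchur_eq_sum_isYam (hlam 0) (y 0) hw, sum_mul]
    have hstep (T : cells (lam 0) → Fin n × Bool)
        (hT : T ∈ univ.filter fun T => IsBarred (lam 0) T ∧ IsYam (w ++ colWord1 (lam 0) T)) :=
      ih (fun i => hlam i.succ) (fun i => y i.succ) (mem_filter.1 hT).2.2
    simp only [mul_assoc]
    rw [sum_congr rfl fun T hT => by rw [hstep T hT, mul_sum], sum_sigma']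
    refine sum_nbij' (fun p => (Fin.cons p.1 p.2 :
        (i : Fin (r + 1)) → cells (lam i) → Fin n × Bool))
      (fun T => ⟨T 0, fun i => T i.succ⟩) ?_ ?_ (fun _ _ => rfl)
      (fun T _ => Fin.cons_self_tail T) ?_
    · rintro ⟨T, T'⟩ h
      simp only [mem_sigma, mem_filter, mem_univ, true_and] at h ⊢
      rw [isBarredSkew_succ_iff, colWord_succ, ← List.append_assoc]
      exact ⟨⟨h.1.1, h.2.1⟩, h.2.2⟩
    · intro T h
      simp only [mem_sigma, mem_filter, mem_univ, true_and] at h ⊢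
      rw [isBarredSkew_succ_iff, colWord_succ, ← List.append_assoc] at h
      exact ⟨⟨h.1.1, h.2.of_append⟩, h.1.2, h.2⟩
    · rintro ⟨T, T'⟩ -
      rw [colWord_succ, ← List.append_assoc, Fin.prod_univ_succ, C_mul, mul_assoc]
      rfl

end ProductExpansion

section Alternant

variable {n : ℕ} {K : Type*} [CommRing K] {lam : Fin n → ℕ} {μ ν : Fin n → ℕ}

lemma IsSSYT.row_le (hlam : IsPartition lam) {T : cells lam → Fin n} (hT : IsSSYT lam T)
    (c : cells lam) : c.1.1 ≤ T c := by
  obtain ⟨⟨⟨i, hi⟩, j⟩, hc⟩ := c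
  induction i with
  | zero => exact Nat.zero_le _
  | succ i ih =>
    have hlt : (⟨i, by omega⟩ : Fin n) < ⟨i + 1, hi⟩ := Fin.lt_def.2 (Nat.lt_succ_self i)
    have hc' : (⟨i, by omega⟩, j) ∈ cells lam :=
      mem_cells.2 ((mem_cells.1 hc).trans_le (hlam hlt.le))
    exact Nat.succ_le_of_lt ((ih _ hc').trans_lt (hT.2 ⟨_, hc'⟩ ⟨_, hc⟩ rfl hlt))

lemma IsSSYT.le_of_row_le_of_col_le (hlam : IsPartition lam) {T : cells lam → Fin n}
    (hT : IsSSYT lam T) {c d : cells lam} (hrow : c.1.1 ≤ d.1.1) (hcol : c.1.2 ≤ d.1.2) :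
    T c ≤ T d := by
  obtain heq | hlt := hrow.eq_or_lt
  · exact hT.1 c d heq hcol
  · have he : (c.1.1, d.1.2) ∈ cells lam := mem_cells.2 ((mem_cells.1 d.2).trans_le (hlam hrow))
    exact (hT.1 c ⟨_, he⟩ rfl hcol).trans (hT.2 ⟨_, he⟩ d rfl hlt).le

/-- The unbarred filling of `lam` whose entry in each cell is the row of that cell. -/
def superstandard (lam : Fin n → ℕ) (c : cells lam) : Fin n × Bool :=
  (c.1.1, false)

lemma isBarred_superstandard (lam : Fin n → ℕ) : IsBarred lam (superstandard lam) :=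
  ⟨fun _ _ h _ => h.le, fun _ _ _ h => h⟩

lemma suffixCount_superstandard (j : ℕ) (k : Fin n) :
    suffixCount 0 (superstandard lam) j k = lam k - j := by
  rw [suffixCount, Pi.zero_apply, zero_add, ← Nat.card_Ico]
  refine card_nbij (fun c => c.1.2) (fun c hc => ?_) (fun c hc d hd hcd => ?_) fun m hm => ?_
  · obtain ⟨-, hj, hk⟩ := mem_filter.1 hc
    obtain rfl := congrArg Prod.fst hk
    exact mem_Ico.2 ⟨hj, mem_cells.1 c.2⟩
  · obtain ⟨-, -, hc⟩ := mem_filter.1 hc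
    obtain ⟨-, -, hd⟩ := mem_filter.1 hd
    have hrow : c.1.1 = d.1.1 := (Prod.ext_iff.1 (hc.trans hd.symm)).1
    exact Subtype.ext (Prod.ext hrow hcd)
  · obtain ⟨hj, hm⟩ := mem_Ico.1 hm
    exact ⟨⟨(k, m), mem_cells.2 hm⟩, by simp [superstandard, hj], rfl⟩

lemma isGood_superstandard (hlam : IsPartition lam) : IsGood 0 (superstandard lam) :=
  fun j k l hkl => by
    rw [suffixCount_superstandard, suffixCount_superstandard]
    exact Nat.sub_le_sub_right (hlam hkl) j

lemma IsGood.val_le_row (hlam : IsPartition lam) {T : cells lam → Fin n × Bool}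
    (hT : IsBarred lam T) (hgood : IsGood 0 T) {c : cells lam} (hc : (T c).2 = false) :
    (T c).1 ≤ c.1.1 := by
  obtain ⟨v, hv⟩ : ∃ v : ℕ, v = (T c).1 := ⟨_, rfl⟩
  induction v generalizing c with
  | zero => exact Fin.le_def.2 (hv ▸ Nat.zero_le _)
  | succ v ih =>
    by_contra! hrow
    let a : Fin n := ⟨v, by omega⟩
    have hca : a ≤ (T c).1 := Fin.le_def.2 ((Nat.le_succ v).trans hv.le)
    have hcount : 0 < suffixCount 0 T c.1.2 a :=
      (Nat.add_pos_right _ (card_pos.2 ⟨c, by simp [← hc]⟩)).trans_le (hgood c.1.2 hca)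
    rw [suffixCount, Pi.zero_apply, zero_add] at hcount
    obtain ⟨d, hd⟩ := card_pos.1 hcount
    obtain ⟨-, hcol, hd⟩ := mem_filter.1 hd
    have hda : (T d).1 = a := by rw [hd]
    have hdrow : (T d).1 ≤ d.1.1 := ih (by rw [hd]) (by rw [hda])
    have hle : c.1.1 ≤ d.1.1 := (Fin.le_def.2 (by simp only [a]; omega)).trans (hda ▸ hdrow)
    have hcd : (T c).1 ≤ (T d).1 := (isBarred_iff.1 hT).le_of_row_le_of_col_le hlam hle hcol
    rw [hda, Fin.le_def, ← hv] at hcd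
    exact Nat.not_succ_le_self v hcd

lemma IsGood.eq_superstandard (hlam : IsPartition lam) {T : cells lam → Fin n × Bool}
    (hT : IsBarred lam T) (hgood : IsGood 0 T) (hbar : ∀ c, (T c).2 = false) :
    T = superstandard lam :=
  funext fun c => Prod.ext
    ((hgood.val_le_row hlam hT (hbar c)).antisymm ((isBarred_iff.1 hT).row_le hlam c)) (hbar c)

theorem alternation_mul_schurPoly (hlam : IsPartition lam) :
    alternation (rhoMonomial K 0) * schurPoly K lam = alternation (rhoMonomial K lam) := by
  rw [← factorialSchur_zero, alternation_mul_factorialSchur hlam _ fun _ _ _ => le_rfl,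
    sum_eq_single (superstandard lam)]
  · have hcount : suffixCount 0 (superstandard lam) 0 = lam :=
      funext fun k => suffixCount_superstandard 0 k
    simp [barMonomial, superstandard, ← hcount]
  · intro T hT hne
    obtain ⟨-, hT, hgood⟩ := mem_filter.1 hT
    obtain ⟨c, hc⟩ : ∃ c, (T c).2 = true := by
      by_contra! h
      exact hne (hgood.eq_superstandard hlam hT fun c => Bool.eq_false_of_not_eq_true (h c))
    rw [barMonomial, prod_eq_zero (i := c) (by simp [hc]) rfl, C_0, zero_mul]
  · exact fun h => absurd
      (mem_filter.2 ⟨mem_univ _, isBarred_superstandard lam, isGood_superstandard hlam⟩) h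

/-- The exponent `ν + ρ` of `rhoMonomial K ν`. -/
noncomputable def rhoExponent (ν : Fin n → ℕ) : Fin n →₀ ℕ :=
  Finsupp.equivFunOnFinite.symm fun i => ν i + rhoPart n i

lemma rhoExponent_apply (ν : Fin n → ℕ) (i : Fin n) : rhoExponent ν i = ν i + rhoPart n i :=
  rfl

lemma strictAnti_rhoExponent (hν : Antitone ν) : StrictAnti (rhoExponent ν) := by
  intro i j hij
  have := hν hij.le
  have := j.isLt
  rw [Fin.lt_def] at hij
  simp only [rhoExponent_apply, rhoPart]
  omega

lemma rhoMonomial_eq_monomial (ν : Fin n → ℕ) : rhoMonomial K ν = monomial (rhoExponent ν) 1 := by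
  rw [monomial_eq, C_1, one_mul, Finsupp.prod_fintype _ _ fun _ => pow_zero _]
  rfl

lemma mapDomain_rhoExponent_eq_iff (hν : Antitone ν) (hμ : Antitone μ) {τ : Equiv.Perm (Fin n)} :
    Finsupp.mapDomain τ (rhoExponent ν) = rhoExponent μ ↔ τ = 1 ∧ ν = μ := by
  refine ⟨fun h => ?_, ?_⟩
  · have happly (i : Fin n) : rhoExponent ν i = rhoExponent μ (τ i) := by
      rw [← h, Finsupp.mapDomain_apply τ.injective]
    have hτ : StrictMono τ := fun i j hij => by
      rw [← (strictAnti_rhoExponent hμ).lt_iff_gt, ← happly, ← happly]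
      exact strictAnti_rhoExponent hν hij
    have hid : (τ : Fin n → Fin n) = id := (hτ.range_inj strictMono_id).1 (by simp)
    refine ⟨Equiv.ext (congrFun hid), funext fun i => ?_⟩
    simpa [hid, rhoExponent_apply] using happly i
  · rintro ⟨rfl, rfl⟩
    exact Finsupp.mapDomain_id

lemma coeff_alternation_rhoMonomial (hν : Antitone ν) (hμ : Antitone μ) :
    coeff (rhoExponent μ) (alternation (rhoMonomial K ν)) = if ν = μ then 1 else 0 := by
  simp only [alternation_apply, rhoMonomial_eq_monomial, coeff_sum, rename_monomial, coeff_smul,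
    coeff_monomial, mapDomain_rhoExponent_eq_iff hν hμ]
  rw [sum_eq_single 1 (fun τ _ h => by simp [h]) (by simp)]
  simp

end Alternant

section LittlewoodRichardson

variable {n r : ℕ} {K : Type*} [CommRing K] {lam : Fin r → Fin n → ℕ} {μ : Fin n → ℕ}

lemma coeff_alternation_mul_sum_schurPoly {c : (Fin n → ℕ) →₀ K}
    (hsupp : ∀ ν, c ν ≠ 0 → IsPartition ν) (hμ : IsPartition μ) :
    coeff (rhoExponent μ)
      (alternation (rhoMonomial K 0) * c.sum fun ν a => C a * schurPoly K ν) = c μ := by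
  rw [Finsupp.sum, mul_sum, coeff_sum]
  have hterm (ν : Fin n → ℕ) (hν : ν ∈ c.support) :
      coeff (rhoExponent μ) (alternation (rhoMonomial K 0) * (C (c ν) * schurPoly K ν)) =
        if ν = μ then c ν else 0 := by
    have hν := hsupp ν (Finsupp.mem_support_iff.1 hν)
    rw [mul_left_comm, alternation_mul_schurPoly hν, coeff_C_mul,
      coeff_alternation_rhoMonomial hν hμ, mul_ite, mul_one, mul_zero]
  rw [sum_congr rfl hterm, sum_ite_eq', ite_eq_left_iff]
  exact fun h => (Finsupp.notMem_support_iff.1 h).symm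

lemma coeff_alternation_mul_prod_factorialSchur (hlam : ∀ i, IsPartition (lam i))
    (y : Fin r → ℤ → K) (hμ : IsPartition μ) :
    coeff (rhoExponent μ)
        (alternation (rhoMonomial K 0) * ∏ i, factorialSchur (lam i) (y i)) =
      ∑ T : (i : Fin r) → cells (lam i) → Fin n × Bool with
        IsBarredSkew lam T ∧ IsYam (colWord lam T) ∧ contentT lam T = μ,
          ∏ i, barMonomial (y i) (T i) := by
  rw [show (0 : Fin n → ℕ) = wordContent n [] from rfl,
    alternation_mul_prod_factorialSchur hlam y isYam_nil, coeff_sum]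
  simp only [List.nil_append, ← and_assoc]
  rw [← filter_filter _ fun T => contentT lam T = μ, sum_filter fun T => contentT lam T = μ]
  refine sum_congr rfl fun T hT => ?_
  obtain ⟨-, hT, hyam⟩ := mem_filter.1 hT
  rw [coeff_C_mul, coeff_alternation_rhoMonomial hyam.antitone_wordContent hμ,
    hT.wordContent_colWord, mul_ite, mul_one, mul_zero]

theorem factorial_LR_rule_general (hlam : ∀ i, IsPartition (lam i)) (y : Fin r → ℤ → K)
    {c : (Fin n → ℕ) →₀ K} (hsupp : ∀ ν, c ν ≠ 0 → IsPartition ν)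
    (hexp : ∏ i, factorialSchur (lam i) (y i) = c.sum fun ν a => C a * schurPoly K ν)
    (hμ : IsPartition μ) :
    c μ = ∑ T : (i : Fin r) → cells (lam i) → Fin n × Bool with
      IsBarredSkew lam T ∧ IsYam (colWord lam T) ∧ contentT lam T = μ,
        ∏ i, barMonomial (y i) (T i) := by
  rw [← coeff_alternation_mul_prod_factorialSchur hlam y hμ, hexp,
    coeff_alternation_mul_sum_schurPoly hsupp hμ]

lemma sumAlgEquiv_rename_inr {R σ τ : Type*} [CommSemiring R] (p : MvPolynomial τ R) :
    sumAlgEquiv R σ τ (rename Sum.inr p) = C p :=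
  DFunLike.congr_fun (sumAlgEquiv_comp_rename_inr R σ τ) p

lemma sumAlgEquiv_factSchur (i : Fin r) (lam : Fin n → ℕ) :
    sumAlgEquiv ℤ _ _ (factSchur n r i lam) = factorialSchur lam fun m => X (i, m) := by
  simp only [factSchur, factorialSchur, map_sum, map_prod, map_add, sumAlgEquiv_X_inl,
    sumAlgEquiv_X_inr]

lemma sumAlgEquiv_schur (lam : Fin n → ℕ) :
    sumAlgEquiv ℤ _ _ (schur n r lam) = schurPoly (MvPolynomial (Fin r × ℤ) ℤ) lam := by
  simp only [schur, schurPoly, map_sum, map_prod, sumAlgEquiv_X_inl]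

end LittlewoodRichardson

/-- Theorem 2.2, the main rule: the coefficient `c_λ̄^μ(y)` in the
Schur expansion of `s_λ̄(x|y)` equals the sum of `c_T(y)` over all barred skew
tableaux of shape `λ̄`, unbarred content `μ`, and Yamanouchi unbarred column word. -/
theorem factorial_LR_rule (n r : ℕ) (hn : 1 ≤ n) (hr : 1 ≤ r)
    (lam : Fin r → Fin n → ℕ) (hlam : ∀ i, IsPartition (lam i))
    (c : (Fin n → ℕ) →₀ MvPolynomial (Fin r × ℤ) ℤ)
    (hsupp : ∀ μ, c μ ≠ 0 → IsPartition μ)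
    (hexp : ∏ i, factSchur n r i (lam i)
      = c.sum fun μ p => rename Sum.inr p * schur n r μ)
    (μ : Fin n → ℕ) (hμ : IsPartition μ) :
    c μ = ∑ T ∈ Finset.univ.filter
        (fun T : (i : Fin r) → cells (lam i) → Fin n × Bool =>
          IsBarredSkew lam T ∧ IsYam (colWord lam T) ∧ contentT lam T = μ),
      cT lam T := by
  refine factorial_LR_rule_general hlam (fun i m => X (i, m)) hsupp ?_ hμ
  have h := congrArg (sumAlgEquiv ℤ (Fin n) (Fin r × ℤ)) hexp
  simpa only [map_prod, map_finsuppSum, map_mul, sumAlgEquiv_factSchur, sumAlgEquiv_schur,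
    sumAlgEquiv_rename_inr] using h
end

section
/- Let r ≥ 1 and let λ̄ = (λ^{(1)},…,λ^{(r)}) be a sequence of partitions in P_n. Then Σ c_T(y) · a_{ρ+ω(T)}(x) = 0, where the sum is over all barred skew tableaux T ∈ B_λ̄ whose unbarred column word is not Yamanouchi. -/
open Finset MvPolynomial

attribute [local instance] Classical.propDecidable

/-!
The alternant `a_{ρ + ω}` is the antisymmetrization of `x^(ρ + ω)`, so the sum is the
antisymmetrization of `∑ T, c_T(y) x^(ρ + ω(T))`. Read each tableau column by column from right to
left and cut it after the first column at which the word stops being Yamanouchi. For some `a` and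
`b = a + 1` that column holds an unbarred `b` but no unbarred `a`, and the part of the word read so
far has exactly one more `b` than `a`; hence `x^ρ` times its `x`-monomial is symmetric in `x_a` and
`x_b`. Fix this part and sum over all ways of continuing it to the left.

It remains to see that this sum over continuations, as a function of the bounding column, is also
symmetric in `x_a` and `x_b`. The induction over columns needs a stronger claim: the sum is
symmetric when the bounding column contains `b` or does not contain `a`, and replacing `a` by `b`
in the bounding column changes it by `x_b + y` times a symmetric polynomial, where `y` is the
variable of an entry `b` just left of the bounding `a`. Antisymmetrization kills what is symmetric
in two of the `x`-variables.
-/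

namespace BarredTableau

section Antisymmetrizer

variable {ι τ R : Type*} [CommRing R]

/-- The action of a permutation of `ι` on the variables `Sum.inl i`; the variables `Sum.inr t` are
parameters, left fixed. -/
noncomputable def permuteX (σ : Equiv.Perm ι) :
    MvPolynomial (ι ⊕ τ) R →ₐ[R] MvPolynomial (ι ⊕ τ) R :=
  rename (Sum.map σ id)

@[simp]
lemma permuteX_X_inl (σ : Equiv.Perm ι) (i : ι) :
    permuteX (τ := τ) (R := R) σ (X (Sum.inl i)) = X (Sum.inl (σ i)) := by
  simp [permuteX]

@[simp]
lemma permuteX_X_inr (σ : Equiv.Perm ι) (t : τ) :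
    permuteX (R := R) σ (X (Sum.inr t)) = X (Sum.inr t) := by
  simp [permuteX]

@[simp]
lemma permuteX_rename_inr (σ : Equiv.Perm ι) (q : MvPolynomial τ R) :
    permuteX σ (rename Sum.inr q) = rename Sum.inr q := by
  simp only [permuteX, rename_rename]
  rfl

lemma permuteX_mul (σ σ' : Equiv.Perm ι) (p : MvPolynomial (ι ⊕ τ) R) :
    permuteX (σ * σ') p = permuteX σ (permuteX σ' p) := by
  simp only [permuteX, rename_rename]
  congr 2
  ext (i | t) <;> simp

variable [Fintype ι] [DecidableEq ι]

/-- The antisymmetrizer `∑ σ, sign σ • σ` in the variables `Sum.inl i`. -/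
noncomputable def antisymmetrize : MvPolynomial (ι ⊕ τ) R →ₗ[R] MvPolynomial (ι ⊕ τ) R :=
  ∑ σ : Equiv.Perm ι, (Equiv.Perm.sign σ : ℤ) • (permuteX σ).toLinearMap

lemma antisymmetrize_apply (p : MvPolynomial (ι ⊕ τ) R) :
    antisymmetrize p = ∑ σ : Equiv.Perm ι, (Equiv.Perm.sign σ : ℤ) • permuteX σ p := by
  simp [antisymmetrize]

lemma antisymmetrize_rename_inr_mul (q : MvPolynomial τ R) (p : MvPolynomial (ι ⊕ τ) R) :
    antisymmetrize (rename Sum.inr q * p) = rename Sum.inr q * antisymmetrize p := by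
  simp only [antisymmetrize_apply, map_mul, permuteX_rename_inr, mul_sum, mul_smul_comm]

lemma antisymmetrize_eq_zero_of_swap {a b : ι} (hab : a ≠ b) {p : MvPolynomial (ι ⊕ τ) R}
    (hp : permuteX (Equiv.swap a b) p = p) : antisymmetrize p = 0 := by
  rw [antisymmetrize_apply]
  refine sum_involution (fun σ _ => σ * Equiv.swap a b) (fun σ _ => ?_) (fun σ _ _ => ?_)
    (fun _ _ => mem_univ _) fun σ _ => Equiv.mul_swap_mul_self a b σ
  · simp [permuteX_mul, hp, Equiv.Perm.sign_mul, Equiv.Perm.sign_swap hab]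
  · simpa [mul_eq_left] using mt Equiv.swap_eq_one_iff.1 hab

end Antisymmetrizer

lemma antisymmetrize_prod_X_pow {n r : ℕ} (e : Fin n → ℕ) :
    antisymmetrize (∏ k, X (Sum.inl k) ^ e k) = avand n r e := by
  rw [avand, Matrix.det_apply, antisymmetrize_apply]
  simp only [map_prod, map_pow, permuteX_X_inl, Matrix.of_apply]
  rfl

lemma map_sum_eq_of_involution {α M : Type*} [AddCommMonoid M] [IsAddTorsionFree M] {s : Finset α}
    (φ : M →+ M) {g : α → M} (σ : α → α) (hσ : ∀ v ∈ s, σ v ∈ s) (hinv : ∀ v ∈ s, σ (σ v) = v)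
    (hφ : ∀ v ∈ s, φ (g v + g (σ v)) = g v + g (σ v)) :
    φ (∑ v ∈ s, g v) = ∑ v ∈ s, g v := by
  have hreindex : ∑ v ∈ s, g (σ v) = ∑ v ∈ s, g v :=
    sum_nbij' σ σ hσ hσ hinv hinv fun _ _ => rfl
  have hdouble : 2 • ∑ v ∈ s, g v = ∑ v ∈ s, (g v + g (σ v)) := by
    rw [two_nsmul, sum_add_distrib, hreindex]
  refine nsmul_right_injective two_ne_zero (?_ : 2 • φ _ = 2 • _)
  rw [← map_nsmul, hdouble, map_sum]
  exact sum_congr rfl hφ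

section Words

lemma isYam_of_append {w u : List ℕ} (h : IsYam (w ++ u)) : IsYam w := by
  intro t k
  have := h (min t w.length) k
  rwa [List.take_append_of_le_length (min_le_right _ _), ← List.take_eq_take_min] at this

lemma exists_of_not_isYam_append {w u : List ℕ} (hu : u.Pairwise (· < ·)) (hw : IsYam w)
    (h : ¬ IsYam (w ++ u)) : ∃ k, k ∉ u ∧ k + 1 ∈ u ∧ w.count (k + 1) = w.count k := by
  simp only [IsYam, not_forall, not_le] at h
  obtain ⟨t, k, hk⟩ := h
  set v := u.take (t - w.length) with hv
  rw [List.take_append, List.count_append, List.count_append, ← hv] at hk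
  have hwk : (w.take t).count (k + 1) ≤ (w.take t).count k := hw t k
  have hv_count : v.count (k + 1) ≤ 1 :=
    List.nodup_iff_count_le_one.1 (hu.take.imp ne_of_lt) _
  have hmem : k + 1 ∈ v := List.count_pos_iff.1 (by lia)
  have hnotMem : k ∉ v := List.count_eq_zero.1 (by lia)
  have hlt : w.length < t := by
    by_contra hle
    simp [hv, Nat.sub_eq_zero_of_le (not_lt.1 hle)] at hmem
  rw [List.take_of_length_le hlt.le] at hk hwk
  refine ⟨k, fun hku => ?_, List.mem_of_mem_take hmem, by lia⟩
  rcases List.mem_append.1 ((List.take_append_drop (t - w.length) u).symm ▸ hku) with hk' | hk'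
  · exact hnotMem hk'
  · exact absurd (hu.rel_of_mem_take_of_mem_drop hmem hk') (by lia)

end Words

section Columns

/-- A column of a tableau, as the partial function sending a row to the entry in that row. -/
abbrev Column (n : ℕ) := Fin n → Option (Fin n)

variable {n : ℕ} {κ : Type*} {a b : Fin n} {u v : Column n}

/-- Strictly increasing columns. The definition also forces the cells of the column to fill an
initial segment of the rows. -/
def IsStrictColumn (v : Column n) : Prop :=
  ∀ ⦃i j⦄, i < j → ∀ y ∈ v j, ∃ x ∈ v i, x < y

lemma IsStrictColumn.lt_iff_lt (hv : IsStrictColumn v) {i j x y : Fin n} (hi : v i = some x)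
    (hj : v j = some y) : x < y ↔ i < j := by
  have mono {i j x y : Fin n} (hi : v i = some x) (hj : v j = some y) (h : i < j) : x < y := by
    obtain ⟨x', hx', hlt⟩ := hv h y hj
    rwa [← Option.some_injective _ (hi.symm.trans hx')] at hlt
  refine ⟨fun h => ?_, mono hi hj⟩
  rcases lt_trichotomy i j with hij | rfl | hij
  · exact hij
  · exact absurd (Option.some_injective _ (hi.symm.trans hj)) h.ne
  · exact absurd (mono hj hi hij) h.asymm

lemma IsStrictColumn.eq_of_eq_some (hv : IsStrictColumn v) {i j x : Fin n} (hi : v i = some x)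
    (hj : v j = some x) : i = j :=
  le_antisymm (not_lt.1 fun h => lt_irrefl x ((hv.lt_iff_lt hj hi).2 h))
    (not_lt.1 fun h => lt_irrefl x ((hv.lt_iff_lt hi hj).2 h))

lemma IsStrictColumn.val_eq_val_add_one (hv : IsStrictColumn v) (hab : (b : ℕ) = a + 1)
    {i j : Fin n} (hi : v i = some a) (hj : v j = some b) : (j : ℕ) = i + 1 := by
  have hij : i < j := (hv.lt_iff_lt hi hj).1 (Fin.lt_def.2 (by lia))
  by_contra hne
  let k : Fin n := ⟨i + 1, by lia⟩
  obtain ⟨x, hx, hxb⟩ := hv (i := k) (j := j) (Fin.lt_def.2 (by grind)) b hj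
  have hax : a < x := (hv.lt_iff_lt hi hx).2 (Fin.lt_def.2 (by grind))
  lia

/-- Exchanges the entries `a` and `b` of a column, unless both occur in it. -/
noncomputable def swapColumn (a b : Fin n) (v : Column n) : Column n :=
  if some a ∈ Set.range v ∧ some b ∈ Set.range v then v
  else fun i => (v i).map (Equiv.swap a b)

lemma swapColumn_of_mem (ha : some a ∈ Set.range v) (hb : some b ∈ Set.range v) :
    swapColumn a b v = v :=
  if_pos ⟨ha, hb⟩

lemma swapColumn_apply (h : ¬ (some a ∈ Set.range v ∧ some b ∈ Set.range v)) (i : Fin n) :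
    swapColumn a b v i = (v i).map (Equiv.swap a b) :=
  congrFun (if_neg h) i

lemma swapColumn_apply_of_ne {i : Fin n} (ha : v i ≠ some a) (hb : v i ≠ some b) :
    swapColumn a b v i = v i := by
  by_cases hmem : some a ∈ Set.range v ∧ some b ∈ Set.range v
  · rw [swapColumn_of_mem hmem.1 hmem.2]
  · rw [swapColumn_apply hmem]
    cases h : v i with
    | none => rfl
    | some c =>
      rw [Option.map_some, Equiv.swap_apply_of_ne_of_ne] <;> rintro rfl
      exacts [ha h, hb h]

lemma swapColumn_of_mem_iff (h : some a ∈ Set.range v ↔ some b ∈ Set.range v) :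
    swapColumn a b v = v := by
  by_cases ha : some a ∈ Set.range v
  · exact swapColumn_of_mem ha (h.1 ha)
  · exact funext fun i =>
      swapColumn_apply_of_ne (fun hi => ha ⟨i, hi⟩) fun hi => ha (h.2 ⟨i, hi⟩)

@[simp]
lemma isSome_swapColumn (i : Fin n) : (swapColumn a b v i).isSome = (v i).isSome := by
  unfold swapColumn
  split <;> simp

lemma some_mem_range_map_swap (c : Fin n) :
    some c ∈ Set.range (fun i => (v i).map (Equiv.swap a b)) ↔
      some (Equiv.swap a b c) ∈ Set.range v := by
  simp only [Set.mem_range, Option.map_eq_some_iff, Equiv.swap_apply_eq_iff, exists_eq_right]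

lemma swapColumn_swapColumn (a b : Fin n) (v : Column n) :
    swapColumn a b (swapColumn a b v) = v := by
  by_cases h : some a ∈ Set.range v ∧ some b ∈ Set.range v
  · rw [swapColumn_of_mem h.1 h.2, swapColumn_of_mem h.1 h.2]
  · have hw : swapColumn a b v = fun i => (v i).map (Equiv.swap a b) := if_neg h
    ext1 i
    rw [hw, swapColumn_apply, Option.map_map]
    · simp [Function.comp_def]
    · rw [some_mem_range_map_swap, some_mem_range_map_swap]
      simpa [and_comm] using h

lemma swap_lt_swap_of_lt (hab : (b : ℕ) = a + 1) {x y : Fin n} (hxy : x < y)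
    (h : ¬ (x = a ∧ y = b)) : Equiv.swap a b x < Equiv.swap a b y := by
  simp only [Equiv.swap_apply_def]
  grind

lemma IsStrictColumn.swapColumn (hab : (b : ℕ) = a + 1) (hv : IsStrictColumn v) :
    IsStrictColumn (swapColumn a b v) := by
  by_cases h : some a ∈ Set.range v ∧ some b ∈ Set.range v
  · rwa [swapColumn_of_mem h.1 h.2]
  · intro i j hij y hy
    rw [swapColumn_apply h] at hy
    obtain ⟨z, hz, rfl⟩ := Option.map_eq_some_iff.1 hy
    obtain ⟨x, hx, hxz⟩ := hv hij z hz
    refine ⟨Equiv.swap a b x, ?_, swap_lt_swap_of_lt hab hxz ?_⟩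
    · rw [swapColumn_apply h, hx, Option.map_some, Option.mem_some]
    · rintro ⟨rfl, rfl⟩
      exact h ⟨⟨i, hx⟩, ⟨j, hz⟩⟩

/-- The condition that the column `q` may stand immediately to the left of the column `p`. A
column comes with its position: the index of its diagram and its index in that diagram. Inside a
diagram the rows must increase weakly; an empty column is compatible with everything on its left. -/
def RowCompatible (p q : (κ × ℕ) × Column n) : Prop :=
  p.1.1 = q.1.1 → ∀ i, ∀ y ∈ p.2 i, p.1.2 = q.1.2 + 1 ∧ ∃ x ∈ q.2 i, x ≤ y

variable {d e : κ × ℕ}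

lemma RowCompatible.swapColumn_right (hab : (b : ℕ) = a + 1) (hu : IsStrictColumn u)
    (hv : IsStrictColumn v) (hub : some a ∈ Set.range u → some b ∈ Set.range u)
    (h : RowCompatible (e, u) (d, v)) : RowCompatible (e, u) (d, swapColumn a b v) := by
  by_cases hmem : some a ∈ Set.range v ∧ some b ∈ Set.range v
  · rwa [swapColumn_of_mem hmem.1 hmem.2]
  intro hed i y hy
  obtain ⟨hpos, x, hx, hxy⟩ := h hed i y hy
  refine ⟨hpos, Equiv.swap a b x, by simp_all [swapColumn_apply hmem], ?_⟩
  by_cases hxa : x = a ∧ y = a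
  · obtain ⟨rfl, rfl⟩ := hxa
    obtain ⟨j, hj⟩ := hub ⟨i, hy⟩
    obtain ⟨-, z, hz, hzb⟩ := h hed j b hj
    have hij : i < j := (hu.lt_iff_lt hy hj).1 (Fin.lt_def.2 (by lia))
    have hyz : y < z := (hv.lt_iff_lt hx hz).2 hij
    obtain rfl : z = b := by lia
    exact absurd ⟨⟨i, hx⟩, ⟨j, hz⟩⟩ hmem
  · simp only [Equiv.swap_apply_def]
    grind

lemma RowCompatible.swapColumn_left (hab : (b : ℕ) = a + 1) (hub : some b ∉ Set.range u)
    (h : RowCompatible (e, u) (d, v)) : RowCompatible (e, swapColumn a b u) (d, v) := by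
  intro hed i y hy
  change y ∈ swapColumn a b u i at hy
  rw [swapColumn_apply fun h => hub h.2] at hy
  obtain ⟨z, hz, rfl⟩ := Option.map_eq_some_iff.1 hy
  obtain ⟨hpos, x, hx, hxz⟩ := h hed i z hz
  refine ⟨hpos, x, hx, hxz.trans ?_⟩
  have hzb : z ≠ b := fun hzb => hub ⟨i, hzb ▸ hz⟩
  simp only [Equiv.swap_apply_def]
  grind

lemma RowCompatible.of_swapColumn_left (hab : (b : ℕ) = a + 1) (hu : IsStrictColumn u)
    (hv : IsStrictColumn v) {i : Fin n} (hi : u i = some a) (hub : some b ∉ Set.range u)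
    (h : RowCompatible (e, swapColumn a b u) (d, v)) (hne : ¬ RowCompatible (e, u) (d, v)) :
    e.1 = d.1 ∧ e.2 = d.2 + 1 ∧ v i = some b ∧ some a ∉ Set.range v := by
  simp only [RowCompatible, not_forall] at hne
  obtain ⟨hed, j, y, hy, hne⟩ := hne
  have hswap {k z} (hz : u k = some z) : e.2 = d.2 + 1 ∧ ∃ x ∈ v k, x ≤ Equiv.swap a b z :=
    h hed k _ (by simp [swapColumn_apply fun h => hub h.2, hz])
  have hyb : y ≠ b := fun hyb => hub ⟨j, hyb ▸ hy⟩
  obtain ⟨hpos, x, hx, hxy⟩ := hswap hy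
  have hyx : y < x := not_le.1 fun hle => hne ⟨hpos, x, hx, hle⟩
  obtain rfl : y = a := by
    by_contra hya
    rw [Equiv.swap_apply_of_ne_of_ne hya hyb] at hxy
    exact absurd hyx hxy.not_gt
  rw [Equiv.swap_apply_left] at hxy
  obtain rfl : x = b := by lia
  obtain rfl := hu.eq_of_eq_some hi hy
  refine ⟨hed, hpos, hx, fun ⟨k, hk⟩ => ?_⟩
  have hki : k < i := (hv.lt_iff_lt hk hx).1 hyx
  obtain ⟨z, hz, hzy⟩ := hu hki y hi
  obtain ⟨-, x', hx', hle⟩ := hswap hz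
  rw [Equiv.swap_apply_of_ne_of_ne hzy.ne (hzy.trans hyx).ne] at hle
  obtain rfl := Option.some_injective _ (hk.symm.trans hx')
  exact absurd hzy hle.not_gt

end Columns

section CompletionSum

variable {n : ℕ} {κ : Type*} {a b : Fin n} {d e : κ × ℕ} {i : Fin n} {u v : Column n}

/-- The variable `y^{(i)}_{a + c(a) - r(a)}` attached to an entry `a` in row `i` of the column at
position `d`. -/
noncomputable def yVar (d : κ × ℕ) (i a : Fin n) : MvPolynomial (Fin n ⊕ κ × ℤ) ℤ :=
  X (Sum.inr (d.1, ysub a (i, d.2)))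

/-- The weight of an entry `a`, summed over its barred and unbarred versions. -/
noncomputable def entryWeight (d : κ × ℕ) (i : Fin n) :
    Option (Fin n) → MvPolynomial (Fin n ⊕ κ × ℤ) ℤ
  | none => 1
  | some a => X (Sum.inl a) + yVar d i a

/-- The weight of a column, summed over all ways of barring its entries. -/
noncomputable def columnWeight (d : κ × ℕ) (v : Column n) : MvPolynomial (Fin n ⊕ κ × ℤ) ℤ :=
  ∏ i, entryWeight d i (v i)

lemma yVar_eq_yVar_of_row_succ (hab : (b : ℕ) = a + 1) (d : κ × ℕ) {i j : Fin n}
    (hij : (j : ℕ) = i + 1) : yVar d j b = yVar d i a := by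
  have : ysub b (j, d.2) = ysub a (i, d.2) := by
    simp only [ysub, hab, hij]
    push_cast
    ring
  rw [yVar, this, yVar]

lemma yVar_eq_yVar_of_column_succ (hab : (b : ℕ) = a + 1) (hed : e.1 = d.1)
    (hpos : e.2 = d.2 + 1) (i : Fin n) : yVar d i b = yVar e i a := by
  simp only [yVar, ysub, hab, hed, hpos]
  congr 4
  push_cast
  ring

@[simp]
lemma permuteX_yVar (σ : Equiv.Perm (Fin n)) (d : κ × ℕ) (i a : Fin n) :
    permuteX σ (yVar d i a) = yVar d i a :=
  permuteX_X_inr _ _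

lemma permuteX_entryWeight {o : Option (Fin n)} (ha : o ≠ some a) (hb : o ≠ some b) :
    permuteX (Equiv.swap a b) (entryWeight d i o) = entryWeight d i o := by
  cases o with
  | none => exact map_one _
  | some c =>
    have hc : Equiv.swap a b c = c := Equiv.swap_apply_of_ne_of_ne (by simpa using ha)
      (by simpa using hb)
    simp [entryWeight, hc]

lemma permuteX_prod_entryWeight {s : Finset (Fin n)} (h : ∀ j ∈ s, v j ≠ some a ∧ v j ≠ some b) :
    permuteX (Equiv.swap a b) (∏ j ∈ s, entryWeight d j (v j)) =
      ∏ j ∈ s, entryWeight d j (v j) := by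
  rw [map_prod]
  exact prod_congr rfl fun j hj => permuteX_entryWeight (h j hj).1 (h j hj).2

lemma columnWeight_eq_mul_prod_erase (d : κ × ℕ) (hi : v i = some a) :
    columnWeight d v =
      (X (Sum.inl a) + yVar d i a) * ∏ j ∈ univ.erase i, entryWeight d j (v j) := by
  rw [columnWeight, ← mul_prod_erase univ _ (mem_univ i), hi, entryWeight]

lemma permuteX_columnWeight (hab : (b : ℕ) = a + 1) (hv : IsStrictColumn v)
    (h : some a ∈ Set.range v ↔ some b ∈ Set.range v) :
    permuteX (Equiv.swap a b) (columnWeight d v) = columnWeight d v := by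
  by_cases ha : some a ∈ Set.range v
  · obtain ⟨i, hi⟩ := ha
    obtain ⟨j, hj⟩ := h.1 ⟨i, hi⟩
    have hij : (j : ℕ) = i + 1 := hv.val_eq_val_add_one hab hi hj
    have hmem : j ∈ univ.erase i := mem_erase.2 ⟨fun h => by lia, mem_univ j⟩
    rw [columnWeight_eq_mul_prod_erase d hi, ← mul_prod_erase _ _ hmem, hj, entryWeight,
      yVar_eq_yVar_of_row_succ hab d hij]
    simp only [map_mul, map_add, permuteX_X_inl, permuteX_yVar, Equiv.swap_apply_left,
      Equiv.swap_apply_right]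
    rw [permuteX_prod_entryWeight fun k hk => ?_]
    · ring
    · simp only [mem_erase] at hk
      exact ⟨fun hka => hk.2.1 (hv.eq_of_eq_some hka hi),
        fun hkb => hk.1 (hv.eq_of_eq_some hkb hj)⟩
  · exact permuteX_prod_entryWeight fun j _ =>
      ⟨fun hj => ha ⟨j, hj⟩, fun hj => ha (h.2 ⟨j, hj⟩)⟩

/-- The symmetry in `x_a` and `x_b` propagated from column to column: `F v` stands for the sum of
the weights of all ways to continue a tableau to the left of its column `v` at position `d`. -/
structure IsSwapStable (a b : Fin n) (d : κ × ℕ)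
    (F : Column n → MvPolynomial (Fin n ⊕ κ × ℤ) ℤ) : Prop where
  permuteX_eq : ∀ v, IsStrictColumn v → (some a ∈ Set.range v → some b ∈ Set.range v) →
    permuteX (Equiv.swap a b) (F v) = F v
  sub_eq : ∀ v, IsStrictColumn v → ∀ i, v i = some a → some b ∉ Set.range v →
    ∃ D, permuteX (Equiv.swap a b) D = D ∧
      F (swapColumn a b v) - F v = (X (Sum.inl b) + yVar d i a) * D

/-- The strict columns of the given shape which may stand at position `d`, to the left of `p`. -/
noncomputable def nextColumns (shape : κ × ℕ → Finset (Fin n)) (p : (κ × ℕ) × Column n)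
    (d : κ × ℕ) : Finset (Column n) :=
  univ.filter fun v =>
    IsStrictColumn v ∧ (∀ i, (v i).isSome ↔ i ∈ shape d) ∧ RowCompatible p (d, v)

variable {shape : κ × ℕ → Finset (Fin n)} {F : Column n → MvPolynomial (Fin n ⊕ κ × ℤ) ℤ}

lemma mem_nextColumns {p : (κ × ℕ) × Column n} : v ∈ nextColumns shape p d ↔
    IsStrictColumn v ∧ (∀ i, (v i).isSome ↔ i ∈ shape d) ∧ RowCompatible p (d, v) :=
  mem_filter_univ v

lemma swapColumn_mem_nextColumns (hab : (b : ℕ) = a + 1) (hu : IsStrictColumn u)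
    (hub : some a ∈ Set.range u → some b ∈ Set.range u) (hv : v ∈ nextColumns shape (e, u) d) :
    swapColumn a b v ∈ nextColumns shape (e, u) d := by
  simp only [mem_nextColumns, isSome_swapColumn] at hv ⊢
  exact ⟨hv.1.swapColumn hab, hv.2.1, hv.2.2.swapColumn_right hab hu hv.1 hub⟩

lemma of_mem_nextColumns_swapColumn_of_notMem (hab : (b : ℕ) = a + 1) (hu : IsStrictColumn u)
    (hi : u i = some a) (hub : some b ∉ Set.range u)
    (hv : v ∈ nextColumns shape (e, swapColumn a b u) d) (hv' : v ∉ nextColumns shape (e, u) d) :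
    IsStrictColumn v ∧ e.1 = d.1 ∧ e.2 = d.2 + 1 ∧ v i = some b ∧ some a ∉ Set.range v := by
  simp only [mem_nextColumns, not_and] at hv hv'
  exact ⟨hv.1, hv.2.2.of_swapColumn_left hab hu hv.1 hi hub (hv' hv.1 hv.2.1)⟩

namespace IsSwapStable

lemma permuteX_add_swapColumn_of_notMem (hF : IsSwapStable a b d F) (hab : (b : ℕ) = a + 1)
    (hv : IsStrictColumn v) (hi : v i = some a) (hb : some b ∉ Set.range v) :
    permuteX (Equiv.swap a b)
        (columnWeight d v * F v + columnWeight d (swapColumn a b v) * F (swapColumn a b v)) =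
      columnWeight d v * F v + columnWeight d (swapColumn a b v) * F (swapColumn a b v) := by
  have hwi : swapColumn a b v i = some b := by
    rw [swapColumn_apply fun h => hb h.2, hi, Option.map_some, Equiv.swap_apply_left]
  have hoff : ∀ j ∈ univ.erase i, v j ≠ some a ∧ v j ≠ some b := fun j hj =>
    ⟨fun hja => ne_of_mem_erase hj (hv.eq_of_eq_some hja hi), fun hjb => hb ⟨j, hjb⟩⟩
  have hQ : ∏ j ∈ univ.erase i, entryWeight d j (swapColumn a b v j) =
      ∏ j ∈ univ.erase i, entryWeight d j (v j) :=
    prod_congr rfl fun j hj => by rw [swapColumn_apply_of_ne (hoff j hj).1 (hoff j hj).2]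
  have hW : permuteX (Equiv.swap a b) (F (swapColumn a b v)) = F (swapColumn a b v) :=
    hF.permuteX_eq _ (hv.swapColumn hab) fun _ => ⟨i, hwi⟩
  obtain ⟨D, hD, hsub⟩ := hF.sub_eq v hv i hi hb
  have hFv : F v = F (swapColumn a b v) - (X (Sum.inl b) + yVar d i a) * D :=
    eq_sub_of_add_eq (sub_eq_iff_eq_add'.1 hsub).symm
  rw [columnWeight_eq_mul_prod_erase d hi, columnWeight_eq_mul_prod_erase d hwi, hQ, hFv]
  simp only [map_add, map_sub, map_mul, permuteX_X_inl, permuteX_yVar, hW, hD,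
    permuteX_prod_entryWeight hoff, Equiv.swap_apply_left, Equiv.swap_apply_right]
  ring

lemma permuteX_add_swapColumn (hF : IsSwapStable a b d F) (hab : (b : ℕ) = a + 1)
    (hv : IsStrictColumn v) :
    permuteX (Equiv.swap a b)
        (columnWeight d v * F v + columnWeight d (swapColumn a b v) * F (swapColumn a b v)) =
      columnWeight d v * F v + columnWeight d (swapColumn a b v) * F (swapColumn a b v) := by
  by_cases hiff : some a ∈ Set.range v ↔ some b ∈ Set.range v
  · simp only [swapColumn_of_mem_iff hiff, map_add, map_mul, permuteX_columnWeight hab hv hiff,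
      hF.permuteX_eq v hv hiff.1]
  by_cases hb : some b ∈ Set.range v
  · have ha : some a ∉ Set.range v := fun ha => hiff ⟨fun _ => hb, fun _ => ha⟩
    obtain ⟨i, hi⟩ := hb
    have hw : swapColumn a b v = fun i => (v i).map (Equiv.swap a b) :=
      funext (swapColumn_apply fun h => ha h.1)
    have hwi : swapColumn a b v i = some a := by simp [hw, hi]
    have hwb : some b ∉ Set.range (swapColumn a b v) := by
      rwa [hw, some_mem_range_map_swap, Equiv.swap_apply_right]
    have := hF.permuteX_add_swapColumn_of_notMem hab (hv.swapColumn hab) hwi hwb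
    rwa [swapColumn_swapColumn, add_comm] at this
  · obtain ⟨i, hi⟩ : some a ∈ Set.range v := by
      by_contra ha
      exact hiff ⟨fun h => absurd h ha, fun h => absurd h hb⟩
    exact hF.permuteX_add_swapColumn_of_notMem hab hv hi hb

lemma sum_nextColumns (hF : IsSwapStable a b d F) (hab : (b : ℕ) = a + 1) :
    IsSwapStable a b e fun u => ∑ v ∈ nextColumns shape (e, u) d, columnWeight d v * F v where
  permuteX_eq u hu hub :=
    map_sum_eq_of_involution (permuteX (Equiv.swap a b) : _ →ₐ[ℤ] _).toRingHom.toAddMonoidHom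
      (swapColumn a b) (fun _ => swapColumn_mem_nextColumns hab hu hub)
      (fun v _ => swapColumn_swapColumn a b v)
      fun _ hv => hF.permuteX_add_swapColumn hab (mem_nextColumns.1 hv).1
  sub_eq u hu i hi hub := by
    have hsub : nextColumns shape (e, u) d ⊆ nextColumns shape (e, swapColumn a b u) d :=
      monotone_filter_right _ fun v _ hv => ⟨hv.1, hv.2.1, hv.2.2.swapColumn_left hab hub⟩
    have hnew : ∀ v ∈ nextColumns shape (e, swapColumn a b u) d \ nextColumns shape (e, u) d,
        IsStrictColumn v ∧ e.1 = d.1 ∧ e.2 = d.2 + 1 ∧ v i = some b ∧ some a ∉ Set.range v :=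
      fun v hv => of_mem_nextColumns_swapColumn_of_notMem hab hu hi hub (mem_sdiff.1 hv).1
        (mem_sdiff.1 hv).2
    refine ⟨∑ v ∈ nextColumns shape (e, swapColumn a b u) d \ nextColumns shape (e, u) d,
      (∏ j ∈ univ.erase i, entryWeight d j (v j)) * F v, ?_, ?_⟩
    · rw [map_sum]
      refine sum_congr rfl fun v hv => ?_
      obtain ⟨hstrict, -, -, hvi, hva⟩ := hnew v hv
      rw [map_mul, hF.permuteX_eq v hstrict fun _ => ⟨i, hvi⟩, permuteX_prod_entryWeight]
      exact fun j hj => ⟨fun hja => hva ⟨j, hja⟩,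
        fun hjb => ne_of_mem_erase hj (hstrict.eq_of_eq_some hjb hvi)⟩
    · rw [← sum_sdiff_eq_sub hsub, mul_sum]
      refine sum_congr rfl fun v hv => ?_
      obtain ⟨-, hed, hpos, hvi, -⟩ := hnew v hv
      rw [columnWeight_eq_mul_prod_erase d hvi, yVar_eq_yVar_of_column_succ hab hed hpos, mul_assoc]

end IsSwapStable

/-- The sum of the weights of all tableaux with columns at the positions `l`, continuing a tableau
to the left of its column `p`. -/
noncomputable def completionSum (shape : κ × ℕ → Finset (Fin n)) :
    List (κ × ℕ) → (κ × ℕ) × Column n → MvPolynomial (Fin n ⊕ κ × ℤ) ℤ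
  | [], _ => 1
  | d :: l, p => ∑ v ∈ nextColumns shape p d, columnWeight d v * completionSum shape l (d, v)

lemma isSwapStable_completionSum (hab : (b : ℕ) = a + 1) (l : List (κ × ℕ)) (e : κ × ℕ) :
    IsSwapStable a b e fun u => completionSum shape l (e, u) := by
  induction l generalizing e with
  | nil => exact ⟨fun _ _ _ => map_one _, fun _ _ _ _ _ => ⟨0, map_zero _, by simp [completionSum]⟩⟩
  | cons d l ih => exact (ih d).sum_nextColumns hab

end CompletionSum

section Completions

variable {n : ℕ} {κ : Type*} {d : κ × ℕ} {i : Fin n} {p : (κ × ℕ) × Column n}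
  {shape : κ × ℕ → Finset (Fin n)} {l : List (κ × ℕ)}

/-- A column of a barred tableau, as the partial function sending a row to the entry in that row;
the `Bool` tells whether the entry is barred. -/
abbrev BarredColumn (n : ℕ) := Fin n → Option (Fin n × Bool)

/-- The column of a tableau obtained by forgetting the bars. -/
def values (e : BarredColumn n) : Column n :=
  fun i => (e i).map Prod.fst

/-- The value of an unbarred entry; empty cells and barred entries have none. -/
def unbarredValue : Option (Fin n × Bool) → Option (Fin n)
  | some (a, false) => some a
  | _ => none

/-- The weight of an entry `a` is `x_a` if it is unbarred, and its `y`-variable if it is barred. -/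
noncomputable def barredEntryWeight (d : κ × ℕ) (i : Fin n) :
    Option (Fin n × Bool) → MvPolynomial (Fin n ⊕ κ × ℤ) ℤ
  | none => 1
  | some (a, false) => X (Sum.inl a)
  | some (a, true) => yVar d i a

/-- The weight of a barred column: the product of the weights of its entries. -/
noncomputable def barredColumnWeight (d : κ × ℕ) (e : BarredColumn n) :
    MvPolynomial (Fin n ⊕ κ × ℤ) ℤ :=
  ∏ i, barredEntryWeight d i (e i)

/-- The unbarred entries of a column, read downwards. -/
def unbarredWord (e : BarredColumn n) : List (Fin n) :=
  (List.finRange n).filterMap fun i => unbarredValue (e i)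

lemma sum_barredEntryWeight (d : κ × ℕ) (i : Fin n) (o : Option (Fin n)) :
    ∑ t with t.map Prod.fst = o, barredEntryWeight d i t = entryWeight d i o := by
  cases o with
  | none =>
    have : (univ.filter fun t : Option (Fin n × Bool) => t.map Prod.fst = none) = {none} := by
      ext (_ | _) <;> simp
    rw [this, sum_singleton]
    rfl
  | some a =>
    have : (univ.filter fun t : Option (Fin n × Bool) => t.map Prod.fst = some a) =
        {some (a, false), some (a, true)} := by
      ext (_ | ⟨c, _ | _⟩) <;> simp
    rw [this, sum_pair (by simp)]
    rfl

lemma sum_barredColumnWeight (d : κ × ℕ) (v : Column n) :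
    ∑ e with values e = v, barredColumnWeight d e = columnWeight d v := by
  simp only [columnWeight, ← sum_barredEntryWeight, prod_univ_sum]
  refine sum_congr ?_ fun _ _ => rfl
  ext e
  simp [values, funext_iff]

lemma prod_map_filterMap {α β M : Type*} [CommMonoid M] (f : α → Option β) (g : β → M)
    (l : List α) : ((l.filterMap f).map g).prod = (l.map fun x => (f x).elim 1 g).prod := by
  induction l with
  | nil => rfl
  | cons x l ih => cases h : f x <;> simp [h, ih]

lemma exists_barredColumnWeight_eq (d : κ × ℕ) (e : BarredColumn n) :
    ∃ q, barredColumnWeight d e =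
      rename Sum.inr q * ((unbarredWord e).map fun a => X (Sum.inl a)).prod := by
  have hentry (i) : ∃ q : MvPolynomial (κ × ℤ) ℤ, barredEntryWeight d i (e i) =
      rename Sum.inr q * (unbarredValue (e i)).elim 1 fun a => X (Sum.inl a) := by
    rcases e i with _ | ⟨a, _ | _⟩
    · exact ⟨1, by simp [barredEntryWeight, unbarredValue]⟩
    · exact ⟨1, by simp [barredEntryWeight, unbarredValue]⟩
    · exact ⟨X (d.1, ysub a (i, d.2)), by simp [barredEntryWeight, unbarredValue, yVar]⟩
  choose q hq using hentry
  refine ⟨∏ i, q i, ?_⟩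
  rw [unbarredWord, prod_map_filterMap, ← Fin.prod_univ_def, map_prod, ← prod_mul_distrib]
  exact prod_congr rfl fun i _ => hq i

lemma mem_unbarredWord {e : BarredColumn n} {a : Fin n} :
    a ∈ unbarredWord e ↔ ∃ i, e i = some (a, false) := by
  simp only [unbarredWord, List.mem_filterMap, List.mem_finRange, true_and]
  refine exists_congr fun i => ?_
  rcases e i with _ | ⟨c, _ | _⟩ <;> simp [unbarredValue]

lemma values_eq_some_of_unbarredValue {e : BarredColumn n} {a : Fin n}
    (h : unbarredValue (e i) = some a) : values e i = some a := by
  unfold values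
  generalize e i = t at h
  rcases t with _ | ⟨c, _ | _⟩
  · cases h
  · exact h
  · cases h

lemma pairwise_lt_unbarredWord {e : BarredColumn n} (he : IsStrictColumn (values e)) :
    (unbarredWord e).Pairwise (· < ·) := by
  rw [unbarredWord, List.pairwise_filterMap]
  exact (List.pairwise_lt_finRange n).imp fun hij x hx y hy =>
    (he.lt_iff_lt (values_eq_some_of_unbarredValue hx) (values_eq_some_of_unbarredValue hy)).2 hij

/-- The lists of barred columns at the positions `l`, of the given shape, that continue a barred
tableau to the left of its column `p` (whose bars are irrelevant). -/
noncomputable def completions (shape : κ × ℕ → Finset (Fin n)) :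
    List (κ × ℕ) → (κ × ℕ) × Column n → Finset (List ((κ × ℕ) × BarredColumn n))
  | [], _ => {[]}
  | d :: l, p =>
    ((univ.filter fun e => values e ∈ nextColumns shape p d).sigma
      fun e => completions shape l (d, values e)).image fun s => (d, s.1) :: s.2

lemma sum_completions_cons {M : Type*} [AddCommMonoid M]
    (f : List ((κ × ℕ) × BarredColumn n) → M) :
    ∑ P ∈ completions shape (d :: l) p, f P =
      ∑ e with values e ∈ nextColumns shape p d,
        ∑ P ∈ completions shape l (d, values e), f ((d, e) :: P) := by
  rw [completions, sum_image, sum_sigma]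
  rintro ⟨e, P⟩ - ⟨e', P'⟩ - h
  simp_all

lemma mem_completions {P : List ((κ × ℕ) × BarredColumn n)} :
    P ∈ completions shape l p ↔ P.map Prod.fst = l ∧
      (∀ q ∈ P, IsStrictColumn (values q.2) ∧ ∀ i, (values q.2 i).isSome ↔ i ∈ shape q.1) ∧
      (p :: P.map fun q => (q.1, values q.2)).IsChain RowCompatible := by
  induction l generalizing p P with
  | nil => cases P <;> simp [completions]
  | cons d l ih =>
    simp only [completions, mem_image, mem_sigma, mem_filter_univ, Sigma.exists, ih,
      mem_nextColumns]
    constructor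
    · rintro ⟨e, P, ⟨⟨hstrict, hshape, hrow⟩, rfl, hP, hchain⟩, rfl⟩
      exact ⟨rfl, List.forall_mem_cons.2 ⟨⟨hstrict, hshape⟩, hP⟩,
        List.isChain_cons_cons.2 ⟨hrow, hchain⟩⟩
    · rintro ⟨hl, hP, hchain⟩
      obtain ⟨⟨_, e⟩, P, rfl, rfl, rfl⟩ := List.map_eq_cons_iff.1 hl
      obtain ⟨⟨hstrict, hshape⟩, hP⟩ := List.forall_mem_cons.1 hP
      obtain ⟨hrow, hchain⟩ := List.isChain_cons_cons.1 hchain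
      exact ⟨e, P, ⟨⟨hstrict, hshape, hrow⟩, rfl, hP, hchain⟩, rfl⟩

/-- The weight of a list of barred columns. -/
noncomputable def weight (P : List ((κ × ℕ) × BarredColumn n)) : MvPolynomial (Fin n ⊕ κ × ℤ) ℤ :=
  (P.map fun q => barredColumnWeight q.1 q.2).prod

lemma weight_cons (d : κ × ℕ) (e : BarredColumn n) (P : List ((κ × ℕ) × BarredColumn n)) :
    weight ((d, e) :: P) = barredColumnWeight d e * weight P :=
  List.prod_cons

/-- The unbarred column word of a list of barred columns. -/
def word (P : List ((κ × ℕ) × BarredColumn n)) : List (Fin n) :=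
  P.flatMap fun q => unbarredWord q.2

lemma sum_weight_completions (shape : κ × ℕ → Finset (Fin n)) (l : List (κ × ℕ))
    (p : (κ × ℕ) × Column n) :
    ∑ P ∈ completions shape l p, weight P = completionSum shape l p := by
  induction l generalizing p with
  | nil => simp [completions, completionSum, weight]
  | cons d l ih =>
    simp only [sum_completions_cons, completionSum, weight_cons, ← mul_sum, ih]
    rw [← sum_fiberwise_of_maps_to (g := values) fun e he => (mem_filter_univ e).1 he]
    refine sum_congr rfl fun v hv => ?_
    rw [← sum_barredColumnWeight, sum_mul, filter_filter]
    refine sum_congr (filter_congr fun e _ => ?_) fun e he => ?_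
    · exact and_iff_right_of_imp fun he => he ▸ hv
    · rw [(mem_filter_univ e).1 he]

end Completions

section Vanishing

variable {n : ℕ} {κ : Type*} {a b : Fin n}

/-- The monomial `x^(ρ + content w)`. -/
noncomputable def rhoMonomial (κ : Type*) (w : List (Fin n)) : MvPolynomial (Fin n ⊕ κ × ℤ) ℤ :=
  ∏ a, X (Sum.inl a) ^ (rhoPart n a + w.count a)

lemma rhoMonomial_append (w u : List (Fin n)) :
    rhoMonomial κ (w ++ u) = rhoMonomial κ w * (u.map fun a => X (Sum.inl a)).prod := by
  rw [prod_list_map_count, prod_subset (subset_univ u.toFinset)]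
  · simp only [rhoMonomial, ← prod_mul_distrib, ← pow_add, List.count_append, add_assoc]
  · intro a _ ha
    rw [List.count_eq_zero.2 (mt List.mem_toFinset.2 ha), pow_zero]

lemma permuteX_rhoMonomial {w : List (Fin n)}
    (h : rhoPart n a + w.count a = rhoPart n b + w.count b) :
    permuteX (Equiv.swap a b) (rhoMonomial κ w) = rhoMonomial κ w := by
  simp only [rhoMonomial, map_prod, map_pow, permuteX_X_inl]
  refine (Equiv.prod_comp (Equiv.swap a b) _).symm.trans (prod_congr rfl fun c _ => ?_)
  rw [Equiv.swap_apply_self]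
  congr 1
  rw [Equiv.swap_apply_def]
  split_ifs with hca hcb
  · rw [hca, h]
  · rw [hcb, h]
  · rfl

lemma exists_rhoMonomial_mul_barredColumnWeight (w : List (Fin n)) (d : κ × ℕ)
    (e : BarredColumn n) : ∃ q, rhoMonomial κ w * barredColumnWeight d e =
      rename Sum.inr q * rhoMonomial κ (w ++ unbarredWord e) := by
  obtain ⟨q, hq⟩ := exists_barredColumnWeight_eq d e
  exact ⟨q, by rw [rhoMonomial_append, hq, mul_left_comm]⟩

lemma antisymmetrize_rhoMonomial_mul_completionSum {w : List (Fin n)} {e : BarredColumn n}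
    (he : IsStrictColumn (values e)) (hw : IsYam (w.map Fin.val))
    (hwe : ¬ IsYam ((w ++ unbarredWord e).map Fin.val)) (shape : κ × ℕ → Finset (Fin n))
    (l : List (κ × ℕ)) (d : κ × ℕ) :
    antisymmetrize (rhoMonomial κ (w ++ unbarredWord e) * completionSum shape l (d, values e)) =
      0 := by
  have hincr : ((unbarredWord e).map Fin.val).Pairwise (· < ·) :=
    List.pairwise_map.2 (pairwise_lt_unbarredWord he)
  rw [List.map_append] at hwe
  obtain ⟨k, hk, hk', hcount⟩ := exists_of_not_isYam_append hincr hw hwe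
  obtain ⟨b, hb, hbk⟩ := List.mem_map.1 hk'
  obtain ⟨a, rfl⟩ : ∃ a : Fin n, (a : ℕ) = k := ⟨⟨k, by lia⟩, rfl⟩
  have ha : a ∉ unbarredWord e := fun ha => hk (List.mem_map_of_mem ha)
  rw [← hbk, List.count_map_of_injective _ _ Fin.val_injective,
    List.count_map_of_injective _ _ Fin.val_injective] at hcount
  have hexp : rhoPart n a + (w ++ unbarredWord e).count a =
      rhoPart n b + (w ++ unbarredWord e).count b := by
    rw [List.count_append, List.count_append, List.count_eq_zero.2 ha,
      List.count_eq_one_of_mem ((pairwise_lt_unbarredWord he).imp ne_of_lt) hb, hcount]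
    simp only [rhoPart]
    lia
  obtain ⟨i, hi⟩ := mem_unbarredWord.1 hb
  have hmem : some b ∈ Set.range (values e) := ⟨i, by simp [values, hi]⟩
  refine antisymmetrize_eq_zero_of_swap (a := a) (b := b) (fun hab => by simp [hab] at hbk) ?_
  rw [map_mul, permuteX_rhoMonomial hexp,
    (isSwapStable_completionSum hbk l d).permuteX_eq _ he fun _ => hmem]

theorem antisymmetrize_sum_not_isYam (shape : κ × ℕ → Finset (Fin n)) (l : List (κ × ℕ))
    (p : (κ × ℕ) × Column n) {w : List (Fin n)} (hw : IsYam (w.map Fin.val)) :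
    antisymmetrize (∑ P ∈ completions shape l p with ¬ IsYam ((w ++ word P).map Fin.val),
      rhoMonomial κ w * weight P) = 0 := by
  induction l generalizing p w with
  | nil => simp [completions, sum_filter, word, hw]
  | cons d l ih =>
    rw [sum_filter, sum_completions_cons, map_sum]
    refine sum_eq_zero fun e he => ?_
    have hstrict : IsStrictColumn (values e) :=
      (mem_nextColumns.1 ((mem_filter_univ e).1 he)).1
    obtain ⟨q, hq⟩ := exists_rhoMonomial_mul_barredColumnWeight w d e
    have hword (P : List ((κ × ℕ) × BarredColumn n)) :
        w ++ word ((d, e) :: P) = w ++ unbarredWord e ++ word P := by simp [word]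
    simp only [weight_cons, ← mul_assoc, hq, hword, ← sum_filter]
    simp only [mul_assoc, ← mul_sum, antisymmetrize_rename_inr_mul]
    refine mul_eq_zero_of_right _ ?_
    by_cases hwe : IsYam ((w ++ unbarredWord e).map Fin.val)
    · rw [mul_sum]; exact ih _ hwe
    · have hbad : ∀ P ∈ completions shape l (d, values e),
          ¬ IsYam ((w ++ unbarredWord e ++ word P).map Fin.val) := fun P _ hP => by
        rw [List.map_append] at hP
        exact hwe (isYam_of_append hP)
      rw [filter_true_of_mem hbad, sum_weight_completions,
        antisymmetrize_rhoMonomial_mul_completionSum hstrict hw hwe]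

end Vanishing

section Tableaux

lemma exists_eq_map_of_nodup {α β : Type*} [Nonempty β] {P : List (α × β)}
    (h : (P.map Prod.fst).Nodup) : ∃ f : α → β, P = (P.map Prod.fst).map fun x => (x, f x) := by
  induction P with
  | nil => exact ⟨fun _ => Classical.arbitrary β, rfl⟩
  | cons q P ih =>
    rw [List.map_cons, List.nodup_cons] at h
    obtain ⟨f, hf⟩ := ih h.2
    refine ⟨Function.update f q.1 q.2, ?_⟩
    rw [List.map_cons, List.map_cons, Function.update_self]
    refine congrArg (q :: ·) (hf.trans (List.map_congr_left fun x hx => ?_))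
    rw [Function.update_of_ne (ne_of_mem_of_not_mem hx h.1)]

lemma isChain_flatMap {α β : Type*} {R : β → β → Prop} {f : α → List β} {l : List α}
    (h : l.Pairwise fun x y => ∀ a ∈ f x, ∀ b ∈ f y, R a b) :
    (l.flatMap f).IsChain R ↔ ∀ x ∈ l, (f x).IsChain R := by
  induction l with
  | nil => simp
  | cons x l ih =>
    rw [List.pairwise_cons] at h
    rw [List.flatMap_cons, List.isChain_append, ih h.2, List.forall_mem_cons]
    refine and_congr_right fun _ => and_iff_left fun a ha b hb => ?_
    obtain ⟨y, hy, hby⟩ := List.mem_flatMap.1 (List.mem_of_mem_head? hb)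
    exact h.1 y hy a (List.mem_of_mem_getLast? ha) b hby

lemma isChain_map_reverse_range {α : Type*} {R : α → α → Prop} {f : ℕ → α} {m : ℕ} :
    ((List.range m).reverse.map f).IsChain R ↔ ∀ j, j + 1 < m → R (f (j + 1)) (f j) := by
  rw [List.isChain_map, List.isChain_reverse, List.isChain_range]
  exact forall_congr' fun j => by rw [lt_tsub_iff_right]

lemma mem_cells {n : ℕ} {mu : Fin n → ℕ} {c : Fin n × ℕ} : c ∈ cells mu ↔ c.2 < mu c.1 := by
  simp only [cells, mem_filter, mem_product, mem_univ, mem_range, true_and, and_iff_right_iff_imp]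
  exact fun h => h.trans_le (le_sup (mem_univ c.1))

variable {n r : ℕ} {lam : Fin r → Fin n → ℕ} {T : (k : Fin r) → cells (lam k) → Fin n × Bool}
  {d : Fin r × ℕ} {i : Fin n}

/-- The rows meeting each column of the skew diagram `λ̄`. -/
def columnRows (lam : Fin r → Fin n → ℕ) (d : Fin r × ℕ) : Finset (Fin n) :=
  univ.filter fun i => d.2 < lam d.1 i

/-- The positions of the columns of the skew diagram `λ̄`, from right to left. -/
def columnPositions (lam : Fin r → Fin n → ℕ) : List (Fin r × ℕ) :=
  (List.finRange r).flatMap fun k => (List.range (univ.sup (lam k))).reverse.map (Prod.mk k)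

/-- The column of a filling of `λ̄` at a given position. -/
noncomputable def columnOf (T : (k : Fin r) → cells (lam k) → Fin n × Bool) (d : Fin r × ℕ) :
    BarredColumn n :=
  fun i => if h : (i, d.2) ∈ cells (lam d.1) then some (T d.1 ⟨(i, d.2), h⟩) else none

/-- A filling of `λ̄`, cut into columns read from right to left. -/
noncomputable def columnList (T : (k : Fin r) → cells (lam k) → Fin n × Bool) :
    List ((Fin r × ℕ) × BarredColumn n) :=
  (columnPositions lam).map fun d => (d, columnOf T d)

lemma mem_columnPositions : d ∈ columnPositions lam ↔ d.2 < univ.sup (lam d.1) := by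
  obtain ⟨k, j⟩ := d
  simp [columnPositions]

lemma mem_columnPositions_of_mem_cells (h : (i, d.2) ∈ cells (lam d.1)) :
    d ∈ columnPositions lam :=
  mem_columnPositions.2 ((mem_cells.1 h).trans_le (le_sup (mem_univ i)))

lemma nodup_columnPositions (lam : Fin r → Fin n → ℕ) : (columnPositions lam).Nodup := by
  refine List.nodup_flatMap.2 ⟨fun k _ =>
    (List.nodup_reverse.2 List.nodup_range).map (Prod.mk_right_injective k), ?_⟩
  refine (List.nodup_finRange r).imp fun hne => ?_
  simp only [Function.onFun, List.disjoint_left, List.mem_map]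
  grind

lemma columnOf_apply (h : (i, d.2) ∈ cells (lam d.1)) :
    columnOf T d i = some (T d.1 ⟨(i, d.2), h⟩) :=
  dif_pos h

lemma isSome_columnOf : (columnOf T d i).isSome ↔ (i, d.2) ∈ cells (lam d.1) := by
  unfold columnOf
  split <;> simp_all

lemma columnList_injective :
    Function.Injective
      (columnList : ((k : Fin r) → cells (lam k) → Fin n × Bool) → List _) := by
  intro T T' h
  funext k ⟨⟨i, j⟩, hc⟩
  have hcol := List.map_inj_left.1 h (k, j) (mem_columnPositions_of_mem_cells (d := (k, j)) hc)
  have hentry := congrFun (Prod.mk.inj hcol).2 i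
  rw [columnOf_apply (d := (k, j)) hc, columnOf_apply (d := (k, j)) hc] at hentry
  exact Option.some_injective _ hentry

lemma exists_columnList_eq {P : List ((Fin r × ℕ) × BarredColumn n)}
    (hpos : P.map Prod.fst = columnPositions lam)
    (hP : ∀ q ∈ P, ∀ i, (values q.2 i).isSome ↔ i ∈ columnRows lam q.1) :
    ∃ T : (k : Fin r) → cells (lam k) → Fin n × Bool, columnList T = P := by
  obtain ⟨f, hf⟩ := exists_eq_map_of_nodup (hpos ▸ nodup_columnPositions lam)
  rw [hpos] at hf
  subst hf
  have hsome {d} (hd : d ∈ columnPositions lam) (i) :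
      (f d i).isSome ↔ (i, d.2) ∈ cells (lam d.1) := by
    simpa [values, columnRows, mem_cells] using hP _ (List.mem_map_of_mem hd) i
  refine ⟨fun k c => (f (k, c.1.2) c.1.1).get
    ((hsome (mem_columnPositions_of_mem_cells (d := (k, c.1.2)) c.2) _).2 c.2), ?_⟩
  refine List.map_congr_left fun d hd => Prod.ext rfl (funext fun i => ?_)
  by_cases h : (i, d.2) ∈ cells (lam d.1)
  · simp [columnOf_apply h]
  · exact (dif_neg h).trans (Option.not_isSome_iff_eq_none.1 (mt (hsome hd i).1 h)).symm

lemma mem_values_columnOf {y : Fin n} : y ∈ values (columnOf T d) i ↔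
    ∃ h : (i, d.2) ∈ cells (lam d.1), (T d.1 ⟨(i, d.2), h⟩).1 = y := by
  by_cases h : (i, d.2) ∈ cells (lam d.1) <;> simp [values, columnOf, h]

lemma isStrictColumn_columnOf_iff (hlam : Antitone (lam d.1)) :
    IsStrictColumn (values (columnOf T d)) ↔ ∀ i i' (h : (i, d.2) ∈ cells (lam d.1))
      (h' : (i', d.2) ∈ cells (lam d.1)), i < i' →
        (T d.1 ⟨(i, d.2), h⟩).1 < (T d.1 ⟨(i', d.2), h'⟩).1 := by
  constructor
  · intro hT i i' h h' hii'
    obtain ⟨x, hx, hlt⟩ := hT hii' _ (mem_values_columnOf.2 ⟨h', rfl⟩)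
    obtain ⟨_, rfl⟩ := mem_values_columnOf.1 hx
    exact hlt
  · intro hT i i' hii' y hy
    obtain ⟨h', rfl⟩ := mem_values_columnOf.1 hy
    have h : (i, d.2) ∈ cells (lam d.1) :=
      mem_cells.2 ((mem_cells.1 h').trans_le (hlam hii'.le))
    exact ⟨_, mem_values_columnOf.2 ⟨h, rfl⟩, hT i i' h h' hii'⟩

lemma rowCompatible_columnOf_iff {k : Fin r} {j : ℕ} :
    RowCompatible ((k, j + 1), values (columnOf T (k, j + 1)))
        ((k, j), values (columnOf T (k, j))) ↔
      ∀ i (h : (i, j) ∈ cells (lam k)) (h' : (i, j + 1) ∈ cells (lam k)),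
        (T k ⟨(i, j), h⟩).1 ≤ (T k ⟨(i, j + 1), h'⟩).1 := by
  constructor
  · intro hT i h h'
    obtain ⟨-, x, hx, hle⟩ := hT rfl i _ (mem_values_columnOf.2 ⟨h', rfl⟩)
    obtain ⟨_, rfl⟩ := mem_values_columnOf.1 hx
    exact hle
  · intro hT _ i y hy
    obtain ⟨h', rfl⟩ := mem_values_columnOf.1 hy
    have h : (i, j) ∈ cells (lam k) := mem_cells.2 (j.lt_succ_self.trans (mem_cells.1 h'))
    exact ⟨rfl, _, mem_values_columnOf.2 ⟨h, rfl⟩, hT i h h'⟩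

lemma isChain_columnList_iff {p : (Fin r × ℕ) × Column n} (hp : ∀ i, p.2 i = none) :
    (p :: (columnList T).map fun q => (q.1, values q.2)).IsChain RowCompatible ↔
      ∀ k j, j + 1 < univ.sup (lam k) →
        RowCompatible ((k, j + 1), values (columnOf T (k, j + 1)))
          ((k, j), values (columnOf T (k, j))) := by
  have hstart (q) : RowCompatible p q := fun _ i y hy => by simp [hp] at hy
  rw [List.isChain_cons, and_iff_right fun q _ => hstart q]
  simp only [columnList, columnPositions, List.map_map, List.map_flatMap]
  rw [isChain_flatMap]
  · simp only [List.mem_finRange, forall_const, Function.comp_def, isChain_map_reverse_range]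
  · refine (List.nodup_finRange r).imp fun {k k'} hne q hq q' hq' hkk' => absurd hkk' ?_
    simp only [List.mem_map] at hq hq'
    obtain ⟨j, -, rfl⟩ := hq
    obtain ⟨j', -, rfl⟩ := hq'
    exact hne

lemma row_monotone_iff {mu : Fin n → ℕ} {f : cells mu → Fin n} :
    (∀ i j (h : (i, j) ∈ cells mu) (h' : (i, j + 1) ∈ cells mu),
        f ⟨(i, j), h⟩ ≤ f ⟨(i, j + 1), h'⟩) ↔
      ∀ c c' : cells mu, c.1.1 = c'.1.1 → c.1.2 ≤ c'.1.2 → f c ≤ f c' := by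
  refine ⟨fun hf => ?_, fun hf i j h h' => hf _ _ rfl j.le_succ⟩
  rintro ⟨⟨i, j⟩, hc⟩ ⟨⟨i', j'⟩, hc'⟩ (rfl : i = i') (hjj' : j ≤ j')
  induction j', hjj' using Nat.le_induction with
  | base => exact le_rfl
  | succ j' _ ih =>
    have hmem : (i, j') ∈ cells mu := mem_cells.2 (j'.lt_succ_self.trans (mem_cells.1 hc'))
    exact (ih hmem).trans (hf i j' hmem hc')

lemma forall_rowCompatible_columnOf_iff :
    (∀ k j, j + 1 < univ.sup (lam k) →
        RowCompatible ((k, j + 1), values (columnOf T (k, j + 1)))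
          ((k, j), values (columnOf T (k, j)))) ↔
      ∀ k, ∀ c c' : cells (lam k), c.1.1 = c'.1.1 → c.1.2 ≤ c'.1.2 → (T k c).1 ≤ (T k c').1 := by
  refine forall_congr' fun k => ?_
  simp only [rowCompatible_columnOf_iff]
  rw [← row_monotone_iff (f := fun c => (T k c).1)]
  exact ⟨fun hT i j h h' => hT j (mem_columnPositions.1
    (mem_columnPositions_of_mem_cells (d := (k, j + 1)) h')) i h h',
    fun hT j _ i h h' => hT i j h h'⟩

lemma forall_mem_columnList_isStrictColumn_iff (hlam : ∀ k, IsPartition (lam k)) :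
    (∀ q ∈ columnList T, IsStrictColumn (values q.2)) ↔
      ∀ k, ∀ c c' : cells (lam k), c.1.2 = c'.1.2 → c.1.1 < c'.1.1 → (T k c).1 < (T k c').1 := by
  simp only [columnList, List.forall_mem_map, isStrictColumn_columnOf_iff (hlam _)]
  constructor
  · rintro hT k ⟨⟨i, j⟩, hc⟩ ⟨⟨i', j'⟩, hc'⟩ (rfl : j = j') hii'
    exact hT (k, j) (mem_columnPositions_of_mem_cells (d := (k, j)) hc) i i' hc hc' hii'
  · exact fun hT d _ i i' h h' hii' => hT d.1 _ _ rfl hii'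

lemma columnList_mem_completions_iff (hlam : ∀ k, IsPartition (lam k))
    {p : (Fin r × ℕ) × Column n} (hp : ∀ i, p.2 i = none) :
    columnList T ∈ completions (columnRows lam) (columnPositions lam) p ↔
      IsBarredSkew lam T := by
  have hpos : (columnList T).map Prod.fst = columnPositions lam := by
    simp [columnList, Function.comp_def]
  have hshape : ∀ q ∈ columnList T, ∀ i, (values q.2 i).isSome ↔ i ∈ columnRows lam q.1 := by
    simp only [columnList, List.forall_mem_map]
    simp [values, isSome_columnOf, columnRows, mem_cells]
  rw [mem_completions, isChain_columnList_iff hp, and_iff_right hpos,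
    forall_rowCompatible_columnOf_iff, forall₂_and, and_iff_left hshape,
    forall_mem_columnList_isStrictColumn_iff hlam, and_comm, ← forall_and]
  rfl

lemma word_columnList (T : (k : Fin r) → cells (lam k) → Fin n × Bool) :
    (word (columnList T)).map Fin.val = colWord lam T := by
  simp only [word, columnList, columnPositions, colWord, colWord1, unbarredWord,
    List.map_flatMap, List.flatMap_map, List.flatMap_assoc, List.map_filterMap]
  congr! 5 with k j i
  unfold columnOf
  split
  · rcases T k _ with ⟨a, _ | _⟩ <;> simp [unbarredValue]
  · rfl

lemma prod_barredEntryWeight (k : Fin r) {mu : Fin n → ℕ} (f : cells mu → Fin n × Bool) :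
    ∏ c, barredEntryWeight (k, c.1.2) c.1.1 (some (f c)) =
      rename Sum.inr (cT1 r k mu f) * ∏ a, X (Sum.inl a) ^ content1 mu f a := by
  have hentry (c) : barredEntryWeight (k, c.1.2) c.1.1 (some (f c)) =
      rename Sum.inr (if (f c).2 = true then X (k, ysub (f c).1 c.1) else 1) *
        ∏ a, if f c = (a, false) then X (Sum.inl a) else 1 := by
    obtain ⟨a, _ | _⟩ := f c <;> simp [barredEntryWeight, yVar]
  simp only [hentry, prod_mul_distrib, ← map_prod, ← prod_filter, cT1, content1]
  rw [prod_comm' (t' := univ) (s' := fun a => univ.filter fun c => f c = (a, false)) (by simp)]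
  simp only [prod_const]

lemma prod_barredColumnWeight_columnOf (T : (k : Fin r) → cells (lam k) → Fin n × Bool)
    (k : Fin r) :
    ∏ j ∈ range (univ.sup (lam k)), barredColumnWeight (k, j) (columnOf T (k, j)) =
      ∏ c, barredEntryWeight (k, c.1.2) c.1.1 (some (T k c)) := by
  have hcell (c : cells (lam k)) : columnOf T (k, c.1.2) c.1.1 = some (T k c) :=
    columnOf_apply (d := (k, c.1.2)) c.2
  simp only [barredColumnWeight, ← hcell]
  rw [← prod_product_right',
    prod_coe_sort (cells (lam k)) fun c => barredEntryWeight (k, c.2) c.1 (columnOf T (k, c.2) c.1)]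
  refine (prod_subset (filter_subset _ _) fun c _ hc => ?_).symm
  rw [columnOf, dif_neg (show (c.1, c.2) ∉ cells (lam k) from hc), barredEntryWeight]

lemma weight_columnList (T : (k : Fin r) → cells (lam k) → Fin n × Bool) :
    weight (columnList T) =
      rename Sum.inr (cT lam T) * ∏ a, X (Sum.inl a) ^ contentT lam T a := by
  calc weight (columnList T)
      = ∏ k, ∏ j ∈ range (univ.sup (lam k)),
          barredColumnWeight (k, j) (columnOf T (k, j)) := by
        rw [weight, columnList, columnPositions, List.map_map, List.map_flatMap,
          List.flatMap_def, List.prod_flatten, List.map_map, Fin.prod_univ_def]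
        congr! 3 with k
        rw [Function.comp_apply, List.map_map]
        exact ((List.reverse_perm _).map _).prod_eq
    _ = ∏ k, (rename Sum.inr (cT1 r k (lam k) (T k)) *
          ∏ a, X (Sum.inl a) ^ content1 (lam k) (T k) a) := by
        simp only [prod_barredColumnWeight_columnOf, prod_barredEntryWeight]
    _ = rename Sum.inr (cT lam T) * ∏ a, X (Sum.inl a) ^ contentT lam T a := by
        rw [prod_mul_distrib, prod_comm, ← map_prod]
        simp only [prod_pow_eq_pow_sum, cT, contentT]

lemma rename_cT_mul_avand (T : (k : Fin r) → cells (lam k) → Fin n × Bool) :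
    rename Sum.inr (cT lam T) * avand n r (fun a => rhoPart n a + contentT lam T a) =
      antisymmetrize (rhoMonomial (Fin r) [] * weight (columnList T)) := by
  rw [weight_columnList, mul_left_comm, antisymmetrize_rename_inr_mul,
    ← antisymmetrize_prod_X_pow]
  simp only [rhoMonomial, List.count_nil, add_zero, pow_add, prod_mul_distrib]

end Tableaux

end BarredTableau

/-- Lemma 3.2: the terms coming from barred skew tableaux whose
unbarred column word is not Yamanouchi cancel out. -/
theorem bad_guys_vanish (n r : ℕ) (hn : 1 ≤ n) (hr : 1 ≤ r)
    (lam : Fin r → Fin n → ℕ) (hlam : ∀ i, IsPartition (lam i)) :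
    ∑ T ∈ Finset.univ.filter
        (fun T : (i : Fin r) → cells (lam i) → Fin n × Bool =>
          IsBarredSkew lam T ∧ ¬ IsYam (colWord lam T)),
      rename Sum.inr (cT lam T) * avand n r (fun k => rhoPart n k + contentT lam T k)
      = 0 := by
  simp only [BarredTableau.rename_cT_mul_avand, ← map_sum]
  let p : (Fin r × ℕ) × BarredTableau.Column n := ((⟨0, hr⟩, 0), fun _ => none)
  rw [← BarredTableau.antisymmetrize_sum_not_isYam (BarredTableau.columnRows lam)
    (BarredTableau.columnPositions lam) p (w := []) (by simp [IsYam])]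
  congr 1
  refine sum_nbij BarredTableau.columnList (fun T hT => ?_)
    BarredTableau.columnList_injective.injOn (fun P hP => ?_) fun T _ => rfl
  · rw [mem_filter_univ, ← BarredTableau.columnList_mem_completions_iff hlam (p := p) fun _ => rfl,
      ← BarredTableau.word_columnList] at hT
    exact mem_filter.2 hT
  · obtain ⟨hmem, hyam⟩ := mem_filter.1 (mem_coe.1 hP)
    obtain ⟨hpos, hshape, -⟩ := BarredTableau.mem_completions.1 hmem
    obtain ⟨T, rfl⟩ := BarredTableau.exists_columnList_eq hpos fun q hq => (hshape q hq).2
    refine ⟨T, mem_coe.2 ((mem_filter_univ _).2 ⟨?_, ?_⟩), rfl⟩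
    · exact (BarredTableau.columnList_mem_completions_iff hlam fun _ => rfl).1 hmem
    · rwa [← BarredTableau.word_columnList]
end
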